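/- arXiv:1705.01433 — 2 statements merged into one kernel-verified Lean document; each statement's English description precedes it below -/
import Mathlib

section
/- In every parity bidding game, threshold budgets exist and are unique: there is exactly one function Thresh : V → [0,1] such that for every vertex v, Player 1 has a winning strategy from v whenever his initial budget exceeds Thresh(v), and Player 2 has a winning strategy from v whenever his initial budget exceeds 1 − Thresh(v). -/
open scoped Classical

/-! ### Bidding games: the basic model -/

/-- One round of a bidding game: the vertex the token was moved to, the winning bid,
and whether Player 1 won the bidding. -/
structure BidRound (V : Type) where
  dest : V
  bid : ℝ
  p1Won : Bool

/-- A history: the initial vertex together with the list of rounds played so far. -/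
structure Hist (V : Type) where
  init : V
  rounds : List (BidRound V)

/-- The vertex currently occupied by the token. -/
def Hist.cur {V : Type} (h : Hist V) : V :=
  h.rounds.getLast?.elim h.init BidRound.dest

/-- The net payment of Player 1 so far (bids paid upon winning minus bids received). -/
def Hist.pay1 {V : Type} (h : Hist V) : ℝ :=
  (h.rounds.map (fun r => if r.p1Won then r.bid else -r.bid)).sum

/-- The net payment of Player 2 so far. -/
def Hist.pay2 {V : Type} (h : Hist V) : ℝ := -h.pay1

/-- The sum of the weights of all vertices visited so far (including the current one). -/
def Hist.energyAll {V : Type} (w : V → ℤ) (h : Hist V) : ℤ :=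
  w h.init + (h.rounds.map (fun r => w r.dest)).sum

/-- A strategy: maps a history to a bid and the vertex to move to upon winning. -/
def Strat (V : Type) := Hist V → ℝ × V

/-- A tie-breaking mechanism: decides at each history whether Player 1 wins a tie. -/
def TieBreak (V : Type) := Hist V → Bool

/-- A bidding game: a finite directed graph in which every vertex has an outgoing edge. -/
structure BiddingGame (V : Type) [Fintype V] where
  E : V → V → Prop
  total : ∀ v, ∃ u, E v u

/-- One round of play: both players bid; the higher bidder (Player 1 upon a tie won by
the tie-breaking mechanism) pays his bid to the other player and moves the token. -/
noncomputable def extend {V : Type} (tb : TieBreak V) (f1 f2 : Strat V) (h : Hist V) : Hist V :=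
  if (f2 h).1 < (f1 h).1 ∨ ((f1 h).1 = (f2 h).1 ∧ tb h = true) then
    ⟨h.init, h.rounds ++ [⟨(f1 h).2, (f1 h).1, true⟩]⟩
  else
    ⟨h.init, h.rounds ++ [⟨(f2 h).2, (f2 h).1, false⟩]⟩

/-- The history after `n` rounds, starting at `v0`. -/
noncomputable def play {V : Type} (tb : TieBreak V) (f1 f2 : Strat V) (v0 : V) : ℕ → Hist V
  | 0 => ⟨v0, []⟩
  | n + 1 => extend tb f1 f2 (play tb f1 f2 v0 n)

/-- The vertex occupied after `n` rounds. -/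
noncomputable def visit {V : Type} (tb : TieBreak V) (f1 f2 : Strat V) (v0 : V) (n : ℕ) : V :=
  (play tb f1 f2 v0 n).cur

/-- The energy (sum of weights) of the prefix of length `n` of the outcome. -/
noncomputable def energy {V : Type} (w : V → ℤ) (tb : TieBreak V) (f1 f2 : Strat V) (v0 : V)
    (n : ℕ) : ℤ :=
  ∑ i ∈ Finset.range n, w (visit tb f1 f2 v0 i)

/-- Player 1's strategy is legal w.r.t. the initial budget `B`: along any play, his bids
are nonnegative, never exceed his current budget, and his moves follow edges. -/
def Legal1 {V : Type} [Fintype V] (G : BiddingGame V) (f1 : Strat V) (B : ℝ) : Prop :=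
  ∀ (tb : TieBreak V) (f2 : Strat V) (v0 : V) (n : ℕ),
    0 ≤ (f1 (play tb f1 f2 v0 n)).1 ∧
    (f1 (play tb f1 f2 v0 n)).1 ≤ B - (play tb f1 f2 v0 n).pay1 ∧
    G.E (play tb f1 f2 v0 n).cur (f1 (play tb f1 f2 v0 n)).2

/-- Player 2's strategy is legal w.r.t. the initial budget `B`. -/
def Legal2 {V : Type} [Fintype V] (G : BiddingGame V) (f2 : Strat V) (B : ℝ) : Prop :=
  ∀ (tb : TieBreak V) (f1 : Strat V) (v0 : V) (n : ℕ),
    0 ≤ (f2 (play tb f1 f2 v0 n)).1 ∧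
    (f2 (play tb f1 f2 v0 n)).1 ≤ B - (play tb f1 f2 v0 n).pay2 ∧
    G.E (play tb f1 f2 v0 n).cur (f2 (play tb f1 f2 v0 n)).2

/-- A memoryless strategy: its action depends only on the current vertex and the
player's current budget (equivalently, the net payments so far). -/
def Memoryless {V : Type} (f : Strat V) : Prop :=
  ∀ h h' : Hist V, h.cur = h'.cur → h.pay1 = h'.pay1 → f h = f h'

/-- A memoryless strategy in a mean-payoff game: its action depends only on the current
vertex, the player's current budget, and the current energy level. -/
def MemorylessE {V : Type} (w : V → ℤ) (f : Strat V) : Prop :=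
  ∀ h h' : Hist V, h.cur = h'.cur → h.pay1 = h'.pay1 →
    h.energyAll w = h'.energyAll w → f h = f h'

/-- A constant-memory strategy for Player 2 (Max): the action depends only on the current
vertex, Player 2's current budget, the current energy level, and a memory state ranging
over a finite set (of size independent of the history), updated round by round. -/
def FiniteMemory2 {V : Type} (w : V → ℤ) (f : Strat V) (B : ℝ) : Prop :=
  ∃ (M : Type) (_ : Fintype M) (m0 : M) (upd : M → BidRound V → M)
    (act : V → ℝ → ℤ → M → ℝ × V),
    ∀ h : Hist V, f h = act h.cur (B - h.pay2) (h.energyAll w) (h.rounds.foldl upd m0)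

/-- Strong connectivity of the arena. -/
def StronglyConnected {V : Type} [Fintype V] (G : BiddingGame V) : Prop :=
  ∀ v u : V, Relation.ReflTransGen G.E v u

/-! ### Richman games -/

/-- The successors of `v`. -/
noncomputable def BiddingGame.adj {V : Type} [Fintype V] (G : BiddingGame V) (v : V) :
    Finset V :=
  Finset.univ.filter (fun u => G.E v u)

lemma BiddingGame.adj_nonempty {V : Type} [Fintype V] (G : BiddingGame V) (v : V) :
    (G.adj v).Nonempty := by
  obtain ⟨u, hu⟩ := G.total v
  exact ⟨u, by simpa [BiddingGame.adj] using hu⟩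

/-- The Richman function `R(v, i)`. -/
noncomputable def Rfun {V : Type} [Fintype V] (G : BiddingGame V) (vR vS : V) :
    ℕ → V → ℝ
  | 0, v => if v = vR then 0 else 1
  | i + 1, v =>
      if v = vR then 0
      else if v = vS then 1
      else ((G.adj v).sup' (G.adj_nonempty v) (Rfun G vR vS i) +
            (G.adj v).inf' (G.adj_nonempty v) (Rfun G vR vS i)) / 2

/-- The limit Richman function `R(v) = lim_i R(v, i)`; since `i ↦ R(v, i)` is
nonincreasing, the limit equals the infimum. -/
noncomputable def Rlim {V : Type} [Fintype V] (G : BiddingGame V) (vR vS : V)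
    (v : V) : ℝ :=
  ⨅ i : ℕ, Rfun G vR vS i v

/-- Player 1 wins an outcome of a Richman game: `vR` is reached, and `vS` is not
reached before that (the game ends once a target is reached). -/
def Win1Richman {V : Type} (tb : TieBreak V) (f1 f2 : Strat V) (v0 vR vS : V) : Prop :=
  ∃ n, visit tb f1 f2 v0 n = vR ∧ ∀ m < n, visit tb f1 f2 v0 m ≠ vS

/-- Player 2 wins an outcome of a Richman game: `vS` is reached first, or no target is
ever reached. -/
def Win2Richman {V : Type} (tb : TieBreak V) (f1 f2 : Strat V) (v0 vR vS : V) : Prop :=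
  (∃ n, visit tb f1 f2 v0 n = vS ∧ ∀ m < n, visit tb f1 f2 v0 m ≠ vR) ∨
  (∀ n, visit tb f1 f2 v0 n ≠ vR ∧ visit tb f1 f2 v0 n ≠ vS)

/-- Player 1 has a winning strategy in the Richman game from `v0` with budget `B`. -/
def Win1RichmanFrom {V : Type} [Fintype V] (G : BiddingGame V) (vR vS v0 : V)
    (B : ℝ) : Prop :=
  ∀ tb : TieBreak V, ∃ f1 : Strat V, Legal1 G f1 B ∧
    ∀ f2 : Strat V, Legal2 G f2 (1 - B) → Win1Richman tb f1 f2 v0 vR vS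

/-- Player 2 has a winning strategy in the Richman game from `v0` with budget `B`. -/
def Win2RichmanFrom {V : Type} [Fintype V] (G : BiddingGame V) (vR vS v0 : V)
    (B : ℝ) : Prop :=
  ∀ tb : TieBreak V, ∃ f2 : Strat V, Legal2 G f2 B ∧
    ∀ f1 : Strat V, Legal1 G f1 (1 - B) → Win2Richman tb f1 f2 v0 vR vS

/-- `t` is a threshold budget at `v` in the Richman game. -/
def IsThreshRichman {V : Type} [Fintype V] (G : BiddingGame V) (vR vS v : V)
    (t : ℝ) : Prop :=
  (∀ B : ℝ, B ≤ 1 → t < B → Win1RichmanFrom G vR vS v B) ∧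
  (∀ B : ℝ, B ≤ 1 → 1 - t < B → Win2RichmanFrom G vR vS v B)

/-! ### Richman games with target sets -/

def Win1RichmanSet {V : Type} (tb : TieBreak V) (f1 f2 : Strat V) (v0 : V)
    (R S : Set V) : Prop :=
  ∃ n, visit tb f1 f2 v0 n ∈ R ∧ ∀ m < n, visit tb f1 f2 v0 m ∉ S

def Win2RichmanSet {V : Type} (tb : TieBreak V) (f1 f2 : Strat V) (v0 : V)
    (R S : Set V) : Prop :=
  (∃ n, visit tb f1 f2 v0 n ∈ S ∧ ∀ m < n, visit tb f1 f2 v0 m ∉ R) ∨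
  (∀ n, visit tb f1 f2 v0 n ∉ R ∧ visit tb f1 f2 v0 n ∉ S)

/-- `t` is a threshold budget at `v` in the Richman game with target sets `R` and `S`. -/
def IsThreshRichmanSet {V : Type} [Fintype V] (G : BiddingGame V) (R S : Set V)
    (v : V) (t : ℝ) : Prop :=
  (∀ B : ℝ, B ≤ 1 → t < B → ∀ tb : TieBreak V, ∃ f1 : Strat V, Legal1 G f1 B ∧
      ∀ f2 : Strat V, Legal2 G f2 (1 - B) → Win1RichmanSet tb f1 f2 v R S) ∧
  (∀ B : ℝ, B ≤ 1 → 1 - t < B → ∀ tb : TieBreak V, ∃ f2 : Strat V, Legal2 G f2 B ∧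
      ∀ f1 : Strat V, Legal1 G f1 (1 - B) → Win2RichmanSet tb f1 f2 v R S)

/-! ### Reachability games -/

/-- `t` is a threshold budget at `v` in the reachability game with target set `T`. -/
def IsThreshReach {V : Type} [Fintype V] (G : BiddingGame V) (T : Set V) (v : V)
    (t : ℝ) : Prop :=
  (∀ B : ℝ, B ≤ 1 → t < B → ∀ tb : TieBreak V, ∃ f1 : Strat V, Legal1 G f1 B ∧
      ∀ f2 : Strat V, Legal2 G f2 (1 - B) → ∃ n, visit tb f1 f2 v n ∈ T) ∧
  (∀ B : ℝ, B ≤ 1 → 1 - t < B → ∀ tb : TieBreak V, ∃ f2 : Strat V, Legal2 G f2 B ∧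
      ∀ f1 : Strat V, Legal1 G f1 (1 - B) → ∀ n, visit tb f1 f2 v n ∉ T)

/-! ### Parity games -/

/-- Player 1 wins an outcome of a parity game: the maximal parity index visited
infinitely often is odd. -/
def Win1Parity {V : Type} (p : V → ℕ) (tb : TieBreak V) (f1 f2 : Strat V)
    (v0 : V) : Prop :=
  Odd (sSup {k : ℕ | ∀ N : ℕ, ∃ n ≥ N, p (visit tb f1 f2 v0 n) = k})

def Win1ParityFrom {V : Type} [Fintype V] (G : BiddingGame V) (p : V → ℕ) (v0 : V)
    (B : ℝ) : Prop :=
  ∀ tb : TieBreak V, ∃ f1 : Strat V, Legal1 G f1 B ∧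
    ∀ f2 : Strat V, Legal2 G f2 (1 - B) → Win1Parity p tb f1 f2 v0

def Win2ParityFrom {V : Type} [Fintype V] (G : BiddingGame V) (p : V → ℕ) (v0 : V)
    (B : ℝ) : Prop :=
  ∀ tb : TieBreak V, ∃ f2 : Strat V, Legal2 G f2 B ∧
    ∀ f1 : Strat V, Legal1 G f1 (1 - B) → ¬ Win1Parity p tb f1 f2 v0

/-- `t` is a threshold budget at `v` in the parity game. -/
def IsThreshParity {V : Type} [Fintype V] (G : BiddingGame V) (p : V → ℕ) (v : V)
    (t : ℝ) : Prop :=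
  (∀ B : ℝ, B ≤ 1 → t < B → Win1ParityFrom G p v B) ∧
  (∀ B : ℝ, B ≤ 1 → 1 - t < B → Win2ParityFrom G p v B)

/-! ### Mean-payoff games (Min is Player 1, Max is Player 2) -/

/-- The mean-payoff value of the outcome. -/
noncomputable def mpval {V : Type} (w : V → ℤ) (tb : TieBreak V) (f1 f2 : Strat V)
    (v0 : V) : ℝ :=
  Filter.liminf (fun n : ℕ => (energy w tb f1 f2 v0 n : ℝ) / n) Filter.atTop

/-- Min can guarantee a nonpositive mean-payoff value from `v0` with budget `B`. -/
def MinWinsFrom {V : Type} [Fintype V] (G : BiddingGame V) (w : V → ℤ) (v0 : V)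
    (B : ℝ) : Prop :=
  ∀ tb : TieBreak V, ∃ f1 : Strat V, Legal1 G f1 B ∧
    ∀ f2 : Strat V, Legal2 G f2 (1 - B) → mpval w tb f1 f2 v0 ≤ 0

/-- Max can guarantee a strictly positive mean-payoff value from `v0` with budget `B`. -/
def MaxWinsFrom {V : Type} [Fintype V] (G : BiddingGame V) (w : V → ℤ) (v0 : V)
    (B : ℝ) : Prop :=
  ∀ tb : TieBreak V, ∃ f2 : Strat V, Legal2 G f2 B ∧
    ∀ f1 : Strat V, Legal1 G f1 (1 - B) → 0 < mpval w tb f1 f2 v0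

/-- `t` is a threshold budget at `v` in the mean-payoff game. -/
def IsThreshMP {V : Type} [Fintype V] (G : BiddingGame V) (w : V → ℤ) (v : V)
    (t : ℝ) : Prop :=
  (∀ B : ℝ, B ≤ 1 → t < B → MinWinsFrom G w v B) ∧
  (∀ B : ℝ, B ≤ 1 → 1 - t < B → MaxWinsFrom G w v B)

/-! ### The split graph `G^u` and the weighted Richman function -/

/-- Edges of `G^u`: `u` is split into `u_s = Sum.inl u` (keeping the outgoing edges of
`u`, with no incoming edges) and `u_t = Sum.inr ()` (receiving the edges into `u`, with
no outgoing edges). -/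
def splitE {V : Type} [Fintype V] (G : BiddingGame V) (u : V) :
    V ⊕ Unit → V ⊕ Unit → Prop
  | Sum.inl v, Sum.inl x => G.E v x ∧ x ≠ u
  | Sum.inl v, Sum.inr _ => G.E v u
  | Sum.inr _, _ => False

/-- The successors in `G^u` of a vertex `v ∈ V` (i.e. of `Sum.inl v`). -/
noncomputable def succu {V : Type} [Fintype V] (G : BiddingGame V) (u v : V) :
    Finset (V ⊕ Unit) :=
  Finset.univ.filter (fun y => splitE G u (Sum.inl v) y)

lemma succu_nonempty {V : Type} [Fintype V] (G : BiddingGame V) (u v : V) :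
    (succu G u v).Nonempty := by
  obtain ⟨x, hx⟩ := G.total v
  by_cases hxu : x = u
  · refine ⟨Sum.inr (), ?_⟩
    simp only [succu, Finset.mem_filter, Finset.mem_univ, true_and]
    exact show G.E v u from hxu ▸ hx
  · refine ⟨Sum.inl x, ?_⟩
    simp only [succu, Finset.mem_filter, Finset.mem_univ, true_and]
    exact show G.E v x ∧ x ≠ u from ⟨hx, hxu⟩

/-- `W(v⁺)`: the maximal value of `W` over the `G^u`-successors of `v`. -/
noncomputable def supWu {V : Type} [Fintype V] (G : BiddingGame V) (u : V)
    (W : V ⊕ Unit → ℝ) (v : V) : ℝ :=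
  (succu G u v).sup' (succu_nonempty G u v) W

/-- `W(v⁻)`: the minimal value of `W` over the `G^u`-successors of `v`. -/
noncomputable def infWu {V : Type} [Fintype V] (G : BiddingGame V) (u : V)
    (W : V ⊕ Unit → ℝ) (v : V) : ℝ :=
  (succu G u v).inf' (succu_nonempty G u v) W

/-- `W` is a weighted Richman function for the weights `w`, split at `u`:
`W(u_t) = 0` and `W(v) = (W(v⁺) + W(v⁻))/2 + w(v)` for every `v ∈ V`
(`Sum.inl v` represents `v`, in particular `Sum.inl u` is `u_s`). -/
def IsWRichman {V : Type} [Fintype V] (G : BiddingGame V) (w : V → ℝ) (u : V)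
    (W : V ⊕ Unit → ℝ) : Prop :=
  W (Sum.inr ()) = 0 ∧
  ∀ v : V, W (Sum.inl v) = (supWu G u W v + infWu G u W v) / 2 + w v

/-- Projection of `G^u`-vertices back to vertices of `G`. -/
def projU {V : Type} (u : V) : V ⊕ Unit → V := Sum.elim id (fun _ => u)

/-- `w_M`: the maximal absolute value of `W` over `V`. -/
noncomputable def wMax {V : Type} [Fintype V] (W : V ⊕ Unit → ℝ) (u : V) : ℝ :=
  Finset.univ.sup' ⟨u, Finset.mem_univ u⟩ (fun v : V => |W (Sum.inl v)|)

/-- `b_M`: the maximal value of the bid `(W(v⁺) − W(v⁻))/2` over `V`. -/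
noncomputable def bMax {V : Type} [Fintype V] (G : BiddingGame V) (u : V)
    (W : V ⊕ Unit → ℝ) : ℝ :=
  Finset.univ.sup' ⟨u, Finset.mem_univ u⟩
    (fun v : V => (supWu G u W v - infWu G u W v) / 2)

/-! ### Reachability in finite graphs -/

/-- Every vertex reachable from `x` can reach `x` back: `x` lies in a bottom strongly
connected component. -/
def IsBottom {V : Type} (E : V → V → Prop) (x : V) : Prop :=
  ∀ y, Relation.ReflTransGen E x y → Relation.ReflTransGen E y x

lemma IsBottom.of_reach {V : Type} {E : V → V → Prop} {x y : V} (hx : IsBottom E x)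
    (hxy : Relation.ReflTransGen E x y) : IsBottom E y :=
  fun _ hz => (hx _ (hxy.trans hz)).trans hxy

lemma exists_isBottom_reach {V : Type} [Finite V] (E : V → V → Prop) (v : V) :
    ∃ x, Relation.ReflTransGen E v x ∧ IsBottom E x := by
  obtain ⟨x, hx, hmin⟩ := Set.exists_min_image {x | Relation.ReflTransGen E v x}
    (fun x => {y | Relation.ReflTransGen E x y}.ncard) (Set.toFinite _)
    ⟨v, Relation.ReflTransGen.refl⟩
  refine ⟨x, hx, fun y hy => ?_⟩
  have hsub : {z | Relation.ReflTransGen E y z} ⊆ {z | Relation.ReflTransGen E x z} :=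
    fun z hz => hy.trans hz
  have heq := Set.eq_of_subset_of_ncard_le hsub (hmin y (hx.trans hy)) (Set.toFinite _)
  exact (heq.symm ▸ Relation.ReflTransGen.refl : x ∈ {z | Relation.ReflTransGen E y z})

/-- A choice of successors that gets closer to `T` whenever `T` is reachable. -/
lemma exists_step_rank {V : Type} (r : V → V → Prop) (tot : ∀ v, ∃ u, r v u) (T : Set V) :
    ∃ (s : V → V) (ρ : V → ℕ), (∀ v, r v (s v)) ∧
      ∀ v ∉ T, (∃ t ∈ T, Relation.ReflTransGen r v t) → ρ (s v) < ρ v := by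
  let D : ℕ → V → Prop := fun n => n.rec (fun v => v ∈ T) (fun _ P v => ∃ u, r v u ∧ P u)
  have hD : ∀ v t, t ∈ T → Relation.ReflTransGen r v t → ∃ n, D n v := by
    intro v t ht hvt
    induction hvt using Relation.ReflTransGen.head_induction_on with
    | refl => exact ⟨0, ht⟩
    | head hab _ ih =>
      obtain ⟨n, hn⟩ := ih
      exact ⟨n + 1, _, hab, hn⟩
  let ρ : V → ℕ := fun v => sInf {n | D n v}
  have key : ∀ v, ∃ u, r v u ∧
      (v ∉ T → (∃ t ∈ T, Relation.ReflTransGen r v t) → ρ u < ρ v) := by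
    intro v
    by_cases h : v ∉ T ∧ ∃ t ∈ T, Relation.ReflTransGen r v t
    · obtain ⟨hv, t, ht, hvt⟩ := h
      have hmem : D (ρ v) v := Nat.sInf_mem (hD v t ht hvt)
      rcases hρ : ρ v with _ | n
      · rw [hρ] at hmem
        exact absurd hmem hv
      · rw [hρ] at hmem
        obtain ⟨u, hu, hn⟩ := hmem
        exact ⟨u, hu, fun _ _ => Nat.lt_succ_of_le (Nat.sInf_le hn)⟩
    · obtain ⟨u, hu⟩ := tot v
      exact ⟨u, hu, fun h1 h2 => absurd ⟨h1, h2⟩ h⟩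
  choose s hs hs' using key
  exact ⟨s, ρ, hs, hs'⟩

/-- A bounded potential that strictly decreases, on average over a lost and a won bidding,
wherever the rank decreases. -/
lemma exists_potential {V : Type} [Finite V] (s : V → V) (ρ : V → ℕ) :
    ∃ (h : V → ℝ) (H : ℝ), 1 ≤ H ∧ (∀ v, 1 ≤ h v ∧ h v ≤ H) ∧
      ∀ v, ρ (s v) < ρ v → H + h (s v) + 2 ≤ 2 * h v := by
  obtain ⟨n, hn⟩ : ∃ n, ∀ v, ρ v ≤ n := by
    obtain ⟨n, hn⟩ := (Set.finite_range ρ).bddAbove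
    exact ⟨n, fun v => hn ⟨v, rfl⟩⟩
  have hone : ∀ m : ℕ, (1 : ℝ) ≤ 2 ^ m := fun m => one_le_pow₀ (by norm_num)
  refine ⟨fun v => 2 + 2 ^ (n + 2) * (1 - (1 / 2) ^ ρ v), 2 ^ (n + 2), hone _, fun v => ⟨?_, ?_⟩,
    fun v hv => ?_⟩
  · have h1 : ((1 : ℝ) / 2) ^ ρ v ≤ 1 := pow_le_one₀ (by norm_num) (by norm_num)
    have h2 := mul_nonneg (zero_le_one.trans (hone (n + 2))) (sub_nonneg.2 h1)
    linarith
  · have h1 : ((1 : ℝ) / 2) ^ n ≤ (1 / 2) ^ ρ v :=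
      pow_le_pow_of_le_one (by norm_num) (by norm_num) (hn v)
    have h2 : (2 : ℝ) ^ (n + 2) * (1 / 2) ^ n = 4 := by
      rw [pow_add, mul_right_comm, ← mul_pow]
      norm_num
    have h3 := mul_le_mul_of_nonneg_left h1 (zero_le_one.trans (hone (n + 2)))
    linarith
  · have h1 : 2 * ((1 : ℝ) / 2) ^ ρ v ≤ (1 / 2) ^ ρ (s v) := by
      have : ((1 : ℝ) / 2) ^ ρ v ≤ (1 / 2) ^ (ρ (s v) + 1) :=
        pow_le_pow_of_le_one (by norm_num) (by norm_num) hv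
      rw [pow_succ] at this
      linarith
    have h3 := mul_le_mul_of_nonneg_left h1 (zero_le_one.trans (hone (n + 2)))
    simp only
    linarith

/-! ### Richman functions -/

/-- The value of `R` at each vertex is the average of its extremal values over the
successors. -/
def IsRichman {V : Type} (E : V → V → Prop) (R : V → ℝ) : Prop :=
  ∀ v, ∃ a b, E v a ∧ E v b ∧ (∀ u, E v u → R a ≤ R u ∧ R u ≤ R b) ∧ 2 * R v = R a + R b

lemma IsRichman.one_sub {V : Type} {E : V → V → Prop} {R : V → ℝ} (hR : IsRichman E R) :
    IsRichman E (fun v => 1 - R v) := by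
  intro v
  obtain ⟨a, b, ha, hb, hab, hv⟩ := hR v
  refine ⟨b, a, hb, ha, fun u hu => ?_, by linarith⟩
  have := hab u hu
  constructor <;> linarith

/-- If every bottom strongly connected component that avoids `T` has value `1`, then `T` is
reachable along value-minimizing edges from every vertex of value less than `1`. -/
lemma IsRichman.exists_reach {V : Type} [Finite V] {E : V → V → Prop} {R : V → ℝ}
    (hR : IsRichman E R) (T : Set V)
    (hT : ∀ x, IsBottom E x → R x < 1 → ∃ t ∈ T, Relation.ReflTransGen E x t)
    {v : V} (hv : R v < 1) :
    ∃ t ∈ T, Relation.ReflTransGen (fun v u => E v u ∧ ∀ u', E v u' → R u ≤ R u') v t := by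
  set r : V → V → Prop := fun v u => E v u ∧ ∀ u', E v u' → R u ≤ R u' with hr
  obtain ⟨w, hw, hmin⟩ := Set.exists_min_image {x | Relation.ReflTransGen r v x} R
    (Set.toFinite _) ⟨v, Relation.ReflTransGen.refl⟩
  have hw1 : R w < 1 := (hmin v Relation.ReflTransGen.refl).trans_lt hv
  have hstep : ∀ x u, Relation.ReflTransGen r v x → R x = R w → E x u →
      r x u ∧ R u = R w := by
    intro x u hx hxw hu
    obtain ⟨a, b, ha, hb, hab, hav⟩ := hR x
    have h1 : R w ≤ R a := hmin a (hx.tail ⟨ha, fun u' hu' => (hab u' hu').1⟩)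
    have h2 := hab b hb
    have h3 := hab u hu
    refine ⟨⟨hu, fun u' hu' => ?_⟩, by linarith⟩
    have h4 := hab u' hu'
    linarith
  have hreach : ∀ x, Relation.ReflTransGen E w x →
      Relation.ReflTransGen r v x ∧ R x = R w := by
    intro x hx
    induction hx with
    | refl => exact ⟨hw, rfl⟩
    | tail _ hab ih =>
      have := hstep _ _ ih.1 ih.2 hab
      exact ⟨ih.1.tail this.1, this.2⟩
  obtain ⟨x, hwx, hx⟩ := exists_isBottom_reach E w
  obtain ⟨t, ht, hxt⟩ := hT x hx ((hreach x hwx).2.trans_lt hw1)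
  exact ⟨t, ht, (hreach t (hwx.trans hxt)).1⟩

/-- Existence of Richman functions with prescribed values `0` and `1` on disjoint closed sets. -/
lemma exists_isRichman {V : Type} [Finite V] (E : V → V → Prop) (tot : ∀ v, ∃ u, E v u)
    (Z O : Set V) (hZ : ∀ v u, E v u → v ∈ Z → u ∈ Z) (hO : ∀ v u, E v u → v ∈ O → u ∈ O)
    (hdisj : Disjoint Z O) :
    ∃ R : V → ℝ, (∀ v, R v ∈ Set.Icc (0 : ℝ) 1) ∧ IsRichman E R ∧
      (∀ v ∈ Z, R v = 0) ∧ ∀ v ∈ O, R v = 1 := by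
  have : Fact ((0 : ℝ) ≤ 1) := ⟨zero_le_one⟩
  have hmin : ∀ (R : V → Set.Icc (0 : ℝ) 1) v, ∃ a, E v a ∧ ∀ u, E v u → R a ≤ R u :=
    fun R v => Set.exists_min_image {u | E v u} R (Set.toFinite _) (tot v)
  have hmax : ∀ (R : V → Set.Icc (0 : ℝ) 1) v, ∃ a, E v a ∧ ∀ u, E v u → R u ≤ R a :=
    fun R v => Set.exists_max_image {u | E v u} R (Set.toFinite _) (tot v)
  choose lo hlo hlo' using hmin
  choose hi hhi hhi' using hmax
  let F : (V → Set.Icc (0 : ℝ) 1) →o (V → Set.Icc (0 : ℝ) 1) :=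
    { toFun := fun R v => if v ∈ Z then ⟨0, by simp⟩ else if v ∈ O then ⟨1, by simp⟩ else
        ⟨((R (lo R v) : ℝ) + R (hi R v)) / 2, by
          have h1 := (R (lo R v)).2
          have h2 := (R (hi R v)).2
          constructor <;> linarith [h1.1, h1.2, h2.1, h2.2]⟩
      monotone' := by
        intro R R' hRR v
        have h1 : (R (lo R v) : ℝ) ≤ R' (lo R' v) :=
          (hlo' R v _ (hlo R' v)).trans (hRR _)
        have h2 : (R (hi R v) : ℝ) ≤ R' (hi R' v) :=
          le_trans (b := ((R' (hi R v) : Set.Icc (0 : ℝ) 1) : ℝ)) (hRR (hi R v))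
            (hhi' R' v _ (hhi R v))
        simp only
        split_ifs
        · exact le_rfl
        · exact le_rfl
        · exact Subtype.mk_le_mk.2 (by linarith) }
  let R := F.lfp
  have hfix : ∀ v, R v = F R v := fun v => (congrFun F.map_lfp v).symm
  have hR0 : ∀ v ∈ Z, (R v : ℝ) = 0 := by
    intro v hv
    rw [hfix]
    simp [F, hv]
  have hR1 : ∀ v ∈ O, (R v : ℝ) = 1 := by
    intro v hv
    have : v ∉ Z := fun h => Set.disjoint_left.1 hdisj h hv
    rw [hfix]
    simp [F, hv, this]
  refine ⟨fun v => R v, fun v => (R v).2, fun v => ?_, hR0, hR1⟩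
  refine ⟨lo R v, hi R v, hlo R v, hhi R v,
    fun u hu => ⟨hlo' R v u hu, hhi' R v u hu⟩, ?_⟩
  by_cases hv : v ∈ Z
  · simp only [hR0 v hv, hR0 _ (hZ _ _ (hlo R v) hv), hR0 _ (hZ _ _ (hhi R v) hv)]
    norm_num
  · by_cases hv' : v ∈ O
    · simp only [hR1 v hv', hR1 _ (hO _ _ (hlo R v) hv'), hR1 _ (hO _ _ (hhi R v) hv')]
      norm_num
    · have : (R v : ℝ) = ((R (lo R v) : ℝ) + R (hi R v)) / 2 := by
        conv_lhs => rw [hfix]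
        simp [F, hv, hv']
      simp only
      linarith

/-! ### The budget-surplus strategy -/

/-- The data of a strategy that repeatedly steers the token to `T`: a Richman supersolution
`R`, preferred moves `s`, and a potential `h` bounded by `H`. -/
structure Steering {V : Type} (E : V → V → Prop) (T : Set V) (R : V → ℝ) where
  s : V → V
  h : V → ℝ
  H : ℝ
  edge : ∀ v, E v (s v)
  nonneg : ∀ v, 0 ≤ R v
  avg : ∀ v u, E v u → R u + R (s v) ≤ 2 * R v
  one_le_H : 1 ≤ H
  one_le_h : ∀ v, 1 ≤ h v
  h_le : ∀ v, h v ≤ H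
  gain : ∀ v ∉ T, R v < 1 → H + h (s v) + 2 ≤ 2 * h v

lemma IsRichman.nonempty_steering {V : Type} [Finite V] {E : V → V → Prop} {R : V → ℝ}
    (hR : IsRichman E R) (h0 : ∀ v, 0 ≤ R v) (T : Set V)
    (hT : ∀ x, IsBottom E x → R x < 1 → ∃ t ∈ T, Relation.ReflTransGen E x t) :
    Nonempty (Steering E T R) := by
  obtain ⟨s, ρ, hs, hρ⟩ := exists_step_rank (fun v u => E v u ∧ ∀ u', E v u' → R u ≤ R u')
    (fun v => by
      obtain ⟨a, b, ha, _, hab, _⟩ := hR v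
      exact ⟨a, ha, fun u hu => (hab u hu).1⟩) T
  obtain ⟨h, H, hH, hh, hgain⟩ := exists_potential s ρ
  refine ⟨⟨s, h, H, fun v => (hs v).1, h0, fun v u hu => ?_, hH, fun v => (hh v).1,
    fun v => (hh v).2, fun v hv hv1 => hgain v (hρ v hv (hR.exists_reach T hT hv1))⟩⟩
  obtain ⟨a, b, ha, _, hab, hav⟩ := hR v
  have h1 := (hab u hu).2
  have h2 := (hs v).2 a ha
  linarith

namespace Steering

variable {V : Type} {E : V → V → Prop} {T : Set V} {R : V → ℝ}

/-- The bid at `v` with scale `δ` and available budget `β`. -/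
noncomputable def bid (S : Steering E T R) (v : V) (δ β : ℝ) : ℝ :=
  max 0 (min (R v - R (S.s v) + if v ∈ T then 0 else δ * (S.h v - S.h (S.s v) - 1)) β)

/-- The surplus over `R` demanded at `v` with scale `δ`. -/
noncomputable def surplus (S : Steering E T R) (v : V) (δ : ℝ) : ℝ :=
  if v ∈ T then δ * S.H else δ * S.h v

lemma surplus_pos (S : Steering E T R) (v : V) {δ : ℝ} (hδ : 0 < δ) : 0 < S.surplus v δ := by
  have h1 := S.one_le_h v
  have h2 := S.one_le_H
  unfold surplus
  split_ifs <;> exact mul_pos hδ (by linarith)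

/-- One round of bidding preserves the surplus over `R`, and increases it outside `T`. -/
lemma surplus_step (S : Steering E T R) {v u : V} {δ β β' : ℝ} (hδ : 0 < δ) (hβ : β ≤ 1)
    (hsur : S.surplus v δ ≤ β - R v) (huE : E v u)
    (hstep : (u = S.s v ∧ β' = β - S.bid v δ β) ∨ β + S.bid v δ β ≤ β') :
    (v ∈ T → δ * S.H ≤ β' - R u) ∧
    (v ∉ T → β - R v - δ * S.h v + δ ≤ β' - R u - δ * S.h u) := by
  have hpos := S.surplus_pos v hδ
  have hRs := S.avg v _ (S.edge v)
  have hRu := S.avg v u huE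
  have hRn := S.nonneg (S.s v)
  unfold surplus at hsur hpos
  unfold bid at hstep
  by_cases hv : v ∈ T
  · simp only [hv, if_true, add_zero] at hsur hpos hstep
    rw [min_eq_left (by linarith), max_eq_right (by linarith)] at hstep
    refine ⟨fun _ => ?_, fun h => absurd hv h⟩
    rcases hstep with ⟨rfl, rfl⟩ | h <;> linarith
  · simp only [hv, if_false] at hsur hpos hstep
    have hg := S.gain v hv (by linarith)
    have h1 := S.h_le v
    have h2 := S.h_le u
    have h3 := S.one_le_h (S.s v)
    have e1 : 0 ≤ δ * (S.h v - S.h (S.s v) - 1) := mul_nonneg hδ.le (by linarith)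
    have e2 : δ * (S.h v - S.h (S.s v) - 1) ≤ δ * S.h v :=
      mul_le_mul_of_nonneg_left (by linarith) hδ.le
    have e3 : δ * (S.h u + S.h (S.s v) + 2) ≤ δ * (2 * S.h v) :=
      mul_le_mul_of_nonneg_left (by linarith) hδ.le
    rw [min_eq_left (by linarith), max_eq_right (by linarith)] at hstep
    refine ⟨fun h => absurd h hv, fun _ => ?_⟩
    rcases hstep with ⟨rfl, rfl⟩ | h <;> linarith

/-- A run in which the surplus bids are made visits `T` infinitely often. -/
lemma frequently_mem (S : Steering E T R) (x : ℕ → V) (β : ℕ → ℝ) (c : ℕ → ℕ) (δ₀ : ℝ)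
    (hδ₀ : 0 < δ₀) (h0 : δ₀ * S.H ≤ β 0 - R (x 0))
    (hc : ∀ n, c (n + 1) = c n + T.indicator 1 (x (n + 1)))
    (hE : ∀ n, E (x n) (x (n + 1))) (hβ : ∀ n, β n ≤ 1)
    (hstep : ∀ n, (x (n + 1) = S.s (x n) ∧
        β (n + 1) = β n - S.bid (x n) (δ₀ / S.H ^ c n) (β n)) ∨
      β n + S.bid (x n) (δ₀ / S.H ^ c n) (β n) ≤ β (n + 1)) :
    ∀ N, ∃ n ≥ N, x n ∈ T := by
  have hH := S.one_le_H
  have hHpos : 0 < S.H := by linarith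
  have hδ : ∀ n, 0 < δ₀ / S.H ^ c n := fun n => by positivity
  have hinv : ∀ n, S.surplus (x n) (δ₀ / S.H ^ c n) ≤ β n - R (x n) := by
    intro n
    induction n with
    | zero =>
      refine le_trans ?_ h0
      have h1 : δ₀ / S.H ^ c 0 ≤ δ₀ := div_le_self hδ₀.le (one_le_pow₀ hH)
      have h2 := S.h_le (x 0)
      have h3 := S.one_le_h (x 0)
      unfold surplus
      split_ifs
      · exact mul_le_mul_of_nonneg_right h1 hHpos.le
      · exact mul_le_mul h1 h2 (by linarith) hδ₀.le
    | succ n ih =>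
      obtain ⟨hs1, hs2⟩ := S.surplus_step (hδ n) (hβ n) ih (hE n) (hstep n)
      have hle := S.h_le (x (n + 1))
      have hge := S.one_le_h (x (n + 1))
      have e1 := mul_le_mul_of_nonneg_left hle (hδ n).le
      have e2 := mul_le_mul_of_nonneg_left hge (hδ n).le
      have key : δ₀ / S.H ^ c n * S.h (x (n + 1)) ≤ β (n + 1) - R (x (n + 1)) := by
        by_cases hx : x n ∈ T
        · linarith [hs1 hx]
        · have := hs2 hx
          simp only [surplus, hx, if_false] at ih
          linarith [hδ n]
      rw [hc]
      by_cases hx' : x (n + 1) ∈ T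
      · simp only [surplus, hx', if_true, Set.indicator_of_mem, Pi.one_apply]
        have : δ₀ / S.H ^ (c n + 1) * S.H = δ₀ / S.H ^ c n := by
          rw [pow_succ]
          field_simp
        linarith
      · simpa only [surplus, hx', if_false, Set.indicator_of_notMem, not_false_eq_true, add_zero]
          using key
  by_contra! hcon
  obtain ⟨N, hN⟩ := hcon
  have hcN : ∀ k, c (N + k) = c N := by
    intro k
    induction k with
    | zero => rfl
    | succ k ih => rw [← add_assoc, hc, ih, Set.indicator_of_notMem (hN _ (by omega)), add_zero]
  have hgrow : ∀ k : ℕ, δ₀ / S.H ^ c N * k ≤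
      β (N + k) - R (x (N + k)) - δ₀ / S.H ^ c N * S.h (x (N + k)) := by
    intro k
    induction k with
    | zero =>
      have := hinv N
      simp only [surplus, hN N le_rfl, if_false] at this
      simp only [Nat.cast_zero, mul_zero, add_zero]
      linarith
    | succ k ih =>
      have hT := hN (N + k) (by omega)
      have := (S.surplus_step (hδ _) (hβ _) (hinv (N + k)) (hE _) (hstep _)).2 hT
      rw [hcN] at this
      rw [← add_assoc]
      push_cast
      linarith
  obtain ⟨k, hk⟩ := Archimedean.arch (1 : ℝ) (hδ N)
  rw [nsmul_eq_mul] at hk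
  have h1 := hgrow k
  have h2 := hβ (N + k)
  have h3 := S.nonneg (x (N + k))
  have h4 := mul_pos (hδ N) (lt_of_lt_of_le one_pos (S.one_le_h (x (N + k))))
  linarith

end Steering

/-! ### Plays of a bidding game -/

/-- The number of visits to `T` along a history. -/
noncomputable def Hist.visits {V : Type} (T : Set V) (h : Hist V) : ℕ :=
  T.indicator 1 h.init + (h.rounds.map (fun r => T.indicator 1 r.dest)).sum

/-- A history extended by one round. -/
def Hist.snoc {V : Type} (h : Hist V) (r : BidRound V) : Hist V := ⟨h.init, h.rounds ++ [r]⟩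

@[simp] lemma Hist.cur_snoc {V : Type} (h : Hist V) (r : BidRound V) :
    (h.snoc r).cur = r.dest := by
  simp [Hist.snoc, Hist.cur]

@[simp] lemma Hist.pay1_snoc {V : Type} (h : Hist V) (r : BidRound V) :
    (h.snoc r).pay1 = h.pay1 + if r.p1Won then r.bid else -r.bid := by
  simp [Hist.snoc, Hist.pay1]

@[simp] lemma Hist.visits_snoc {V : Type} (T : Set V) (h : Hist V) (r : BidRound V) :
    (h.snoc r).visits T = h.visits T + T.indicator 1 r.dest := by
  simp [Hist.snoc, Hist.visits, add_assoc]

lemma play_succ_cases {V : Type} (tb : TieBreak V) (f1 f2 : Strat V) (v0 : V) (n : ℕ) :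
    let h := play tb f1 f2 v0 n
    (play tb f1 f2 v0 (n + 1) = h.snoc ⟨(f1 h).2, (f1 h).1, true⟩ ∧ (f2 h).1 ≤ (f1 h).1) ∨
    (play tb f1 f2 v0 (n + 1) = h.snoc ⟨(f2 h).2, (f2 h).1, false⟩ ∧ (f1 h).1 ≤ (f2 h).1) := by
  intro h
  change (extend tb f1 f2 h = _ ∧ _) ∨ (extend tb f1 f2 h = _ ∧ _)
  unfold extend
  split_ifs with hc
  · left
    exact ⟨rfl, hc.elim le_of_lt fun e => e.1.ge⟩
  · right
    push Not at hc
    exact ⟨rfl, hc.1⟩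

lemma legal1_of_forall {V : Type} [Fintype V] (G : BiddingGame V) (f : Strat V) {B : ℝ}
    (hB : 0 ≤ B) (h0 : ∀ h, 0 ≤ (f h).1)
    (h1 : ∀ h, 0 ≤ B - h.pay1 → (f h).1 ≤ B - h.pay1) (hE : ∀ h, G.E h.cur (f h).2) :
    Legal1 G f B := by
  intro tb f2 v0 n
  refine ⟨h0 _, h1 _ ?_, hE _⟩
  induction n with
  | zero => simpa [play, Hist.pay1] using hB
  | succ n ih =>
    have h2 := h0 (play tb f f2 v0 n)
    have h3 := h1 _ ih
    rcases play_succ_cases tb f f2 v0 n with ⟨h, hle⟩ | ⟨h, hle⟩ <;> rw [h] <;> simp <;> linarith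

lemma legal2_of_forall {V : Type} [Fintype V] (G : BiddingGame V) (f : Strat V) {B : ℝ}
    (hB : 0 ≤ B) (h0 : ∀ h, 0 ≤ (f h).1)
    (h1 : ∀ h, 0 ≤ B - h.pay2 → (f h).1 ≤ B - h.pay2) (hE : ∀ h, G.E h.cur (f h).2) :
    Legal2 G f B := by
  intro tb f1 v0 n
  refine ⟨h0 _, h1 _ ?_, hE _⟩
  induction n with
  | zero => simpa [play, Hist.pay2, Hist.pay1] using hB
  | succ n ih =>
    have h2 := h0 (play tb f1 f v0 n)
    have h3 := h1 _ ih
    simp only [Hist.pay2] at h3 ih ⊢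
    rcases play_succ_cases tb f1 f v0 n with ⟨h, hle⟩ | ⟨h, hle⟩ <;> rw [h] <;> simp <;> linarith

lemma visit_edge {V : Type} [Fintype V] (G : BiddingGame V) {tb : TieBreak V} {f1 f2 : Strat V}
    {B1 B2 : ℝ} (hf1 : Legal1 G f1 B1) (hf2 : Legal2 G f2 B2) (v0 : V) (n : ℕ) :
    G.E (visit tb f1 f2 v0 n) (visit tb f1 f2 v0 (n + 1)) := by
  unfold visit
  rcases play_succ_cases tb f1 f2 v0 n with ⟨h, -⟩ | ⟨h, -⟩ <;> rw [h, Hist.cur_snoc]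
  · exact (hf1 tb f2 v0 n).2.2
  · exact (hf2 tb f1 v0 n).2.2

lemma Steering.bid_nonneg {V : Type} {E : V → V → Prop} {T : Set V} {R : V → ℝ}
    (S : Steering E T R) (v : V) (δ β : ℝ) : 0 ≤ S.bid v δ β := le_max_left _ _

lemma Steering.bid_le {V : Type} {E : V → V → Prop} {T : Set V} {R : V → ℝ}
    (S : Steering E T R) (v : V) (δ : ℝ) {β : ℝ} (hβ : 0 ≤ β) : S.bid v δ β ≤ β :=
  max_le hβ (min_le_right _ _)

lemma Steering.exists_strategy1 {V : Type} [Fintype V] (G : BiddingGame V) {T : Set V}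
    {R : V → ℝ} (S : Steering G.E T R) {v : V} {B : ℝ} (hB : R v < B) :
    ∃ f1 : Strat V, Legal1 G f1 B ∧ ∀ (tb : TieBreak V) (f2 : Strat V),
      Legal2 G f2 (1 - B) → ∀ N, ∃ n ≥ N, visit tb f1 f2 v n ∈ T := by
  have hHpos : 0 < S.H := lt_of_lt_of_le one_pos S.one_le_H
  let δ₀ := (B - R v) / S.H
  have hδ₀ : 0 < δ₀ := div_pos (sub_pos.2 hB) hHpos
  let f1 : Strat V := fun h =>
    (S.bid h.cur (δ₀ / S.H ^ h.visits T) (B - h.pay1), S.s h.cur)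
  have hf1 : Legal1 G f1 B := legal1_of_forall G f1 ((S.nonneg v).trans hB.le)
    (fun h => S.bid_nonneg _ _ _) (fun h hh => S.bid_le _ _ hh) (fun h => S.edge _)
  refine ⟨f1, hf1, fun tb f2 hf2 => ?_⟩
  refine S.frequently_mem (visit tb f1 f2 v) (fun n => B - (play tb f1 f2 v n).pay1)
    (fun n => (play tb f1 f2 v n).visits T) δ₀ hδ₀ ?_ (fun n => ?_)
    (visit_edge G hf1 hf2 v) (fun n => ?_) (fun n => ?_)
  · simp [δ₀, hHpos.ne', visit, play, Hist.pay1, Hist.cur]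
  · simp only [visit]
    rcases play_succ_cases tb f1 f2 v n with ⟨h, -⟩ | ⟨h, -⟩ <;> rw [h] <;> simp
  · have h1 := hf2 tb f1 v n
    simp only [Hist.pay2] at h1
    linarith [h1.1, h1.2.1]
  · simp only [visit]
    rcases play_succ_cases tb f1 f2 v n with ⟨h, hle⟩ | ⟨h, hle⟩
    · left
      rw [h]
      simp only [Hist.cur_snoc, Hist.pay1_snoc, if_true]
      exact ⟨rfl, by simp only [f1]; ring⟩
    · right
      rw [h]
      simp only [f1] at hle
      simp
      linarith

lemma Steering.exists_strategy2 {V : Type} [Fintype V] (G : BiddingGame V) {T : Set V}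
    {R : V → ℝ} (S : Steering G.E T R) {v : V} {B : ℝ} (hB : R v < B) :
    ∃ f2 : Strat V, Legal2 G f2 B ∧ ∀ (tb : TieBreak V) (f1 : Strat V),
      Legal1 G f1 (1 - B) → ∀ N, ∃ n ≥ N, visit tb f1 f2 v n ∈ T := by
  have hHpos : 0 < S.H := lt_of_lt_of_le one_pos S.one_le_H
  let δ₀ := (B - R v) / S.H
  have hδ₀ : 0 < δ₀ := div_pos (sub_pos.2 hB) hHpos
  let f2 : Strat V := fun h =>
    (S.bid h.cur (δ₀ / S.H ^ h.visits T) (B - h.pay2), S.s h.cur)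
  have hf2 : Legal2 G f2 B := legal2_of_forall G f2 ((S.nonneg v).trans hB.le)
    (fun h => S.bid_nonneg _ _ _) (fun h hh => S.bid_le _ _ hh) (fun h => S.edge _)
  refine ⟨f2, hf2, fun tb f1 hf1 => ?_⟩
  refine S.frequently_mem (visit tb f1 f2 v) (fun n => B - (play tb f1 f2 v n).pay2)
    (fun n => (play tb f1 f2 v n).visits T) δ₀ hδ₀ ?_ (fun n => ?_)
    (visit_edge G hf1 hf2 v) (fun n => ?_) (fun n => ?_)
  · simp [δ₀, hHpos.ne', visit, play, Hist.pay1, Hist.pay2, Hist.cur]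
  · simp only [visit]
    rcases play_succ_cases tb f1 f2 v n with ⟨h, -⟩ | ⟨h, -⟩ <;> rw [h] <;> simp
  · have h1 := hf1 tb f2 v n
    simp only [Hist.pay2]
    linarith [h1.1, h1.2.1]
  · simp only [visit]
    rcases play_succ_cases tb f1 f2 v n with ⟨h, hle⟩ | ⟨h, hle⟩
    · right
      rw [h]
      change S.bid _ _ _ ≤ _ at hle
      simp only [Hist.pay2, Hist.pay1_snoc, if_true] at hle ⊢
      linarith
    · left
      rw [h]
      refine ⟨by simp [f2], ?_⟩
      simp only [f2, Hist.pay2, Hist.pay1_snoc]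
      simp
      ring

/-! ### Parity games -/

/-- The vertices of maximal parity index in their bottom strongly connected component. -/
def IsDominant {V : Type} (E : V → V → Prop) (p : V → ℕ) (x : V) : Prop :=
  IsBottom E x ∧ ∀ y, Relation.ReflTransGen E x y → p y ≤ p x

lemma IsBottom.exists_isDominant {V : Type} [Finite V] {E : V → V → Prop} (p : V → ℕ) {x : V}
    (hx : IsBottom E x) : ∃ t, Relation.ReflTransGen E x t ∧ IsDominant E p t := by
  obtain ⟨t, ht, hmax⟩ := Set.exists_max_image {y | Relation.ReflTransGen E x y} p
    (Set.toFinite _) ⟨x, Relation.ReflTransGen.refl⟩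
  exact ⟨t, ht, hx.of_reach ht, fun y hy => hmax y (ht.trans hy)⟩

lemma IsDominant.eq_of_reach {V : Type} {E : V → V → Prop} {p : V → ℕ} {t t' : V}
    (ht : IsDominant E p t) (ht' : IsDominant E p t') (h : Relation.ReflTransGen E t t') : p t' = p t :=
  le_antisymm (ht.2 _ h) (ht'.2 _ (ht.1 _ h))

/-- If top vertices are visited infinitely often, the maximal parity index visited infinitely
often is the index of one of them. -/
lemma sSup_parity_of_frequently {V : Type} {E : V → V → Prop} (p : V → ℕ) (x : ℕ → V)
    (hE : ∀ n, E (x n) (x (n + 1))) (T : Set V) (hT : ∀ t ∈ T, IsDominant E p t)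
    (hfreq : ∀ N, ∃ n ≥ N, x n ∈ T) :
    ∃ t ∈ T, sSup {k : ℕ | ∀ N : ℕ, ∃ n ≥ N, p (x n) = k} = p t := by
  obtain ⟨m, -, hm⟩ := hfreq 0
  have hreach : ∀ n ≥ m, Relation.ReflTransGen E (x m) (x n) := by
    intro n hn
    induction n, hn using Nat.le_induction with
    | base => exact Relation.ReflTransGen.refl
    | succ n _ ih => exact ih.tail (hE n)
  refine ⟨x m, hm, IsGreatest.csSup_eq ⟨fun N => ?_, fun k hk => ?_⟩⟩
  · obtain ⟨n, hn, hnT⟩ := hfreq (max N m)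
    exact ⟨n, (le_max_left _ _).trans hn,
      (hT _ hm).eq_of_reach (hT _ hnT) (hreach n ((le_max_right _ _).trans hn))⟩
  · obtain ⟨n, hn, rfl⟩ := hk m
    exact (hT _ hm).2 _ (hreach n hn)

lemma exists_isThreshParity {V : Type} [Fintype V] (G : BiddingGame V) (p : V → ℕ) :
    ∃ R : V → ℝ, ∀ v : V, R v ∈ Set.Icc (0 : ℝ) 1 ∧ IsThreshParity G p v (R v) := by
  let T1 : Set V := {x | IsDominant G.E p x ∧ Odd (p x)}
  let T2 : Set V := {x | IsDominant G.E p x ∧ ¬ Odd (p x)}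
  let basin : Set V → Set V := fun T =>
    {x | IsBottom G.E x ∧ ∃ t ∈ T, Relation.ReflTransGen G.E x t}
  have hclosed : ∀ T v u, G.E v u → v ∈ basin T → u ∈ basin T := by
    rintro T v u hu ⟨hb, t, ht, hvt⟩
    have hvu := Relation.ReflTransGen.single hu
    exact ⟨hb.of_reach hvu, t, ht, (hb u hvu).trans hvt⟩
  have hdisj : Disjoint (basin T1) (basin T2) := by
    rw [Set.disjoint_left]
    rintro x ⟨hb, t, ht, hxt⟩ ⟨-, t', ht', hxt'⟩
    have := ht.1.eq_of_reach ht'.1 ((hb t hxt).trans hxt')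
    exact ht'.2 (this ▸ ht.2)
  have hcover : ∀ x, IsBottom G.E x → x ∈ basin T1 ∨ x ∈ basin T2 := by
    intro x hx
    obtain ⟨t, hxt, ht⟩ := hx.exists_isDominant p
    by_cases ho : Odd (p t)
    · exact Or.inl ⟨hx, t, ⟨ht, ho⟩, hxt⟩
    · exact Or.inr ⟨hx, t, ⟨ht, ho⟩, hxt⟩
  obtain ⟨R, hR01, hR, hR0, hR1⟩ := exists_isRichman G.E G.total (basin T1) (basin T2)
    (hclosed T1) (hclosed T2) hdisj
  obtain ⟨S1⟩ := hR.nonempty_steering (fun v => (hR01 v).1) T1 (by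
    intro x hx hlt
    rcases hcover x hx with h | h
    · exact h.2
    · exact absurd (hR1 x h) hlt.ne)
  obtain ⟨S2⟩ := hR.one_sub.nonempty_steering (fun v => sub_nonneg.2 (hR01 v).2) T2 (by
    intro x hx hlt
    rcases hcover x hx with h | h
    · rw [hR0 x h] at hlt
      norm_num at hlt
    · exact h.2)
  refine ⟨R, fun v => ⟨hR01 v, fun B _ hB tb => ?_, fun B _ hB tb => ?_⟩⟩
  · obtain ⟨f1, hf1, hwin⟩ := S1.exists_strategy1 G hB
    refine ⟨f1, hf1, fun f2 hf2 => ?_⟩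
    obtain ⟨t, ht, hsup⟩ := sSup_parity_of_frequently p _ (visit_edge G hf1 hf2 v) T1
      (fun t ht => ht.1) (hwin tb f2 hf2)
    unfold Win1Parity
    rw [hsup]
    exact ht.2
  · obtain ⟨f2, hf2, hwin⟩ := S2.exists_strategy2 G hB
    refine ⟨f2, hf2, fun f1 hf1 => ?_⟩
    obtain ⟨t, ht, hsup⟩ := sSup_parity_of_frequently p _ (visit_edge G hf1 hf2 v) T2
      (fun t ht => ht.1) (hwin tb f1 hf1)
    unfold Win1Parity
    rw [hsup]
    exact ht.2

lemma IsThreshParity.le {V : Type} [Fintype V] {G : BiddingGame V} {p : V → ℕ} {v : V}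
    {t t' : ℝ} (ht : IsThreshParity G p v t) (h0 : 0 ≤ t) (ht' : IsThreshParity G p v t')
    (h1 : t' ≤ 1) : t' ≤ t := by
  by_contra! hlt
  obtain ⟨f1, hf1, hwin1⟩ := ht.1 ((t + t') / 2) (by linarith) (by linarith) (fun _ => true)
  obtain ⟨f2, hf2, hwin2⟩ :=
    ht'.2 (1 - (t + t') / 2) (by linarith) (by linarith) (fun _ => true)
  exact hwin2 f1 (by rwa [sub_sub_cancel]) (hwin1 f2 hf2)

/-- In every parity bidding game, threshold budgets exist and are
unique: there is exactly one function `Thresh : V → [0,1]` such that Player 1 wins from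
`v` whenever his budget exceeds `Thresh v` and Player 2 wins from `v` whenever his
budget exceeds `1 - Thresh v`. -/
theorem parity_threshold_exists_unique
    {V : Type} [Fintype V] (G : BiddingGame V) (p : V → ℕ) :
    ∃! Thresh : V → ℝ,
      ∀ v : V, Thresh v ∈ Set.Icc (0 : ℝ) 1 ∧ IsThreshParity G p v (Thresh v) := by
  obtain ⟨R, hR⟩ := exists_isThreshParity G p
  refine ⟨R, hR, fun R' hR' => funext fun v => le_antisymm ?_ ?_⟩
  · exact (hR v).2.le (hR v).1.1 (hR' v).2 (hR' v).1.2
  · exact (hR' v).2.le (hR' v).1.1 (hR v).2 (hR v).1.2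
end

section
/- In every mean-payoff bidding game, threshold budgets exist and are unique: there is exactly one function Thresh : V → [0,1] such that for every vertex v, Min guarantees a nonpositive mean-payoff value from v whenever his initial budget exceeds Thresh(v), and Max guarantees a strictly positive mean-payoff value from v whenever his initial budget exceeds 1 − Thresh(v). -/
open scoped Classical

namespace MPBidding

/-! ### Reduction to one-player causal strategies -/

/-- Turn an arbitrary action into a legal one at vertex `p.1` with budget `p.2`. -/
noncomputable def clampAct {V : Type} [Fintype V] (G : BiddingGame V) (p : V × ℝ)
    (a : ℝ × V) : ℝ × V :=
  (max 0 (min a.1 p.2), if G.E p.1 a.2 then a.2 else Classical.choose (G.total p.1))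

lemma clampAct_nonneg {V : Type} [Fintype V] (G : BiddingGame V) (p : V × ℝ) (a : ℝ × V) :
    0 ≤ (clampAct G p a).1 := le_max_left _ _

lemma clampAct_le {V : Type} [Fintype V] (G : BiddingGame V) (p : V × ℝ) (a : ℝ × V)
    (hp : 0 ≤ p.2) : (clampAct G p a).1 ≤ p.2 := max_le hp (min_le_right _ _)

lemma clampAct_edge {V : Type} [Fintype V] (G : BiddingGame V) (p : V × ℝ) (a : ℝ × V) :
    G.E p.1 (clampAct G p a).2 := by
  unfold clampAct
  dsimp only
  split_ifs with h
  · exact h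
  · exact Classical.choose_spec (G.total p.1)

lemma clampAct_eq {V : Type} [Fintype V] (G : BiddingGame V) (p : V × ℝ) (a : ℝ × V)
    (h0 : 0 ≤ a.1) (h1 : a.1 ≤ p.2) (h2 : G.E p.1 a.2) : clampAct G p a = a := by
  unfold clampAct
  rw [min_eq_left h1, max_eq_right h0, if_pos h2]

/-- The action at time `n` depends only on the sequence of vertices and budgets up to `n`. -/
def Causal {V : Type} (σ : ℕ → (ℕ → V × ℝ) → ℝ × V) : Prop :=
  ∀ n x y, (∀ i ≤ n, x i = y i) → σ n x = σ n y

/-- The sequence `x` of vertices and budgets can arise when the player follows `σ`. -/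
def Consistent {V : Type} [Fintype V] (G : BiddingGame V)
    (σ : ℕ → (ℕ → V × ℝ) → ℝ × V) (x : ℕ → V × ℝ) : Prop :=
  ∀ n, x (n + 1) = ((clampAct G (x n) (σ n x)).2, (x n).2 - (clampAct G (x n) (σ n x)).1) ∨
    (G.E (x n).1 (x (n + 1)).1 ∧ (x n).2 + (clampAct G (x n) (σ n x)).1 ≤ (x (n + 1)).2 ∧
      (x (n + 1)).2 ≤ 1)

/-- A player with budget `B` can secure the objective `Win` from `v`. -/
def Secures {V : Type} [Fintype V] (G : BiddingGame V) (Win : (ℕ → V) → Prop) (v : V)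
    (B : ℝ) : Prop :=
  ∃ σ, Causal σ ∧ ∀ x : ℕ → V × ℝ, x 0 = (v, B) → Consistent G σ x → Win (fun n => (x n).1)

lemma Consistent.budget_mem {V : Type} [Fintype V] {G : BiddingGame V}
    {σ : ℕ → (ℕ → V × ℝ) → ℝ × V} {x : ℕ → V × ℝ} (hx : Consistent G σ x)
    (h0 : 0 ≤ (x 0).2) (h1 : (x 0).2 ≤ 1) (n : ℕ) : 0 ≤ (x n).2 ∧ (x n).2 ≤ 1 := by
  induction n with
  | zero => exact ⟨h0, h1⟩
  | succ n ih =>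
    have hn := clampAct_nonneg G (x n) (σ n x)
    have hl := clampAct_le G (x n) (σ n x) ih.1
    rcases hx n with h | ⟨_, h, h'⟩
    · rw [h]
      exact ⟨by dsimp only; linarith, by dsimp only; linarith [ih.2]⟩
    · exact ⟨by linarith [ih.1], h'⟩

lemma Consistent.edge {V : Type} [Fintype V] {G : BiddingGame V}
    {σ : ℕ → (ℕ → V × ℝ) → ℝ × V} {x : ℕ → V × ℝ} (hx : Consistent G σ x) (n : ℕ) :
    G.E (x n).1 (x (n + 1)).1 := by
  rcases hx n with h | h
  · rw [h]
    exact clampAct_edge G _ _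
  · exact h.1

lemma cur_snoc {V : Type} (v : V) (l : List (BidRound V)) (r : BidRound V) :
    (Hist.mk v (l ++ [r])).cur = r.dest := by
  simp [Hist.cur]

lemma pay1_snoc {V : Type} (v : V) (l : List (BidRound V)) (r : BidRound V) :
    (Hist.mk v (l ++ [r])).pay1 = (Hist.mk v l).pay1 + (if r.p1Won then r.bid else -r.bid) := by
  simp [Hist.pay1]

lemma extend_cases {V : Type} (tb : TieBreak V) (f1 f2 : Strat V) (h : Hist V) :
    ((f2 h).1 ≤ (f1 h).1 ∧ extend tb f1 f2 h = ⟨h.init, h.rounds ++ [⟨(f1 h).2, (f1 h).1, true⟩]⟩) ∨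
    ((f1 h).1 ≤ (f2 h).1 ∧
      extend tb f1 f2 h = ⟨h.init, h.rounds ++ [⟨(f2 h).2, (f2 h).1, false⟩]⟩) := by
  unfold extend
  split_ifs with hc
  · left
    refine ⟨?_, rfl⟩
    rcases hc with hc | hc
    · exact hc.le
    · exact hc.1.ge
  · right
    refine ⟨?_, rfl⟩
    by_contra! hlt
    exact hc (Or.inl hlt)

lemma play_succ_cases {V : Type} (tb : TieBreak V) (f1 f2 : Strat V) (v : V) (n : ℕ) :
    ((play tb f1 f2 v (n + 1)).cur = (f1 (play tb f1 f2 v n)).2 ∧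
      (play tb f1 f2 v (n + 1)).pay1 =
        (play tb f1 f2 v n).pay1 + (f1 (play tb f1 f2 v n)).1) ∨
    ((f1 (play tb f1 f2 v n)).1 ≤ (f2 (play tb f1 f2 v n)).1 ∧
      (play tb f1 f2 v (n + 1)).cur = (f2 (play tb f1 f2 v n)).2 ∧
      (play tb f1 f2 v (n + 1)).pay1 =
        (play tb f1 f2 v n).pay1 - (f2 (play tb f1 f2 v n)).1) := by
  rcases extend_cases tb f1 f2 (play tb f1 f2 v n) with ⟨_, h⟩ | ⟨hl, h⟩
  · left
    rw [play, h, cur_snoc, pay1_snoc]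
    simp
  · right
    rw [play, h, cur_snoc, pay1_snoc]
    simp [hl, sub_eq_add_neg]

lemma play_init {V : Type} (tb : TieBreak V) (f1 f2 : Strat V) (v : V) (n : ℕ) :
    (play tb f1 f2 v n).init = v := by
  induction n with
  | zero => rfl
  | succ n ih =>
    rcases extend_cases tb f1 f2 (play tb f1 f2 v n) with ⟨_, h⟩ | ⟨_, h⟩ <;>
      rw [play, h] <;> exact ih

lemma play_length {V : Type} (tb : TieBreak V) (f1 f2 : Strat V) (v : V) (n : ℕ) :
    (play tb f1 f2 v n).rounds.length = n := by
  induction n with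
  | zero => rfl
  | succ n ih =>
    rcases extend_cases tb f1 f2 (play tb f1 f2 v n) with ⟨_, h⟩ | ⟨_, h⟩ <;>
      rw [play, h] <;> simp [ih]

lemma play_take {V : Type} (tb : TieBreak V) (f1 f2 : Strat V) (v : V) (n i : ℕ) (hi : i ≤ n) :
    (⟨v, (play tb f1 f2 v n).rounds.take i⟩ : Hist V) = play tb f1 f2 v i := by
  induction n with
  | zero =>
    obtain rfl : i = 0 := by omega
    rfl
  | succ n ih =>
    rcases Nat.lt_or_ge n i with hlt | hle
    · obtain rfl : i = n + 1 := by omega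
      rw [List.take_of_length_le (play_length tb f1 f2 v (n + 1)).le]
      exact congrArg (fun u => Hist.mk u (play tb f1 f2 v (n + 1)).rounds)
        (play_init tb f1 f2 v (n + 1)).symm
    · rw [← ih hle]
      rcases extend_cases tb f1 f2 (play tb f1 f2 v n) with ⟨_, h⟩ | ⟨_, h⟩ <;>
        · rw [play, h]
          dsimp only
          rw [List.take_append_of_le_length (by rw [play_length]; exact hle)]

/-- The strategy of Player 1 induced by a causal strategy. -/
noncomputable def toStrat {V : Type} [Fintype V] (G : BiddingGame V)
    (σ : ℕ → (ℕ → V × ℝ) → ℝ × V) (B : ℝ) : Strat V := fun h =>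
  clampAct G (h.cur, B - h.pay1) (σ h.rounds.length fun i =>
    ((Hist.mk h.init (h.rounds.take i)).cur, B - (Hist.mk h.init (h.rounds.take i)).pay1))

lemma toStrat_legal {V : Type} [Fintype V] (G : BiddingGame V)
    (σ : ℕ → (ℕ → V × ℝ) → ℝ × V) (B : ℝ) (hB : 0 ≤ B) : Legal1 G (toStrat G σ B) B := by
  intro tb f2 v n
  have key : 0 ≤ B - (play tb (toStrat G σ B) f2 v n).pay1 := by
    induction n with
    | zero => simpa [play, Hist.pay1] using hB
    | succ n ih =>
      have h1 : (toStrat G σ B (play tb (toStrat G σ B) f2 v n)).1 ≤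
        B - (play tb (toStrat G σ B) f2 v n).pay1 := clampAct_le G _ _ ih
      have h0 : 0 ≤ (toStrat G σ B (play tb (toStrat G σ B) f2 v n)).1 := clampAct_nonneg G _ _
      rcases play_succ_cases tb (toStrat G σ B) f2 v n with ⟨_, h⟩ | ⟨h', _, h⟩ <;>
        rw [h] <;> linarith
  exact ⟨clampAct_nonneg G _ _, clampAct_le G _ _ key,
    clampAct_edge G ((play tb (toStrat G σ B) f2 v n).cur, _) _⟩

lemma Secures.player1 {V : Type} [Fintype V] {G : BiddingGame V} {Win : (ℕ → V) → Prop}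
    {v : V} {B : ℝ} (h : Secures G Win v B) (hB : 0 ≤ B) (tb : TieBreak V) :
    ∃ f1 : Strat V, Legal1 G f1 B ∧
      ∀ f2 : Strat V, Legal2 G f2 (1 - B) → Win (visit tb f1 f2 v) := by
  obtain ⟨σ, hσ, hw⟩ := h
  refine ⟨toStrat G σ B, toStrat_legal G σ B hB, fun f2 hf2 => ?_⟩
  set f1 := toStrat G σ B with hf1
  set x : ℕ → V × ℝ := fun n => (visit tb f1 f2 v n, B - (play tb f1 f2 v n).pay1) with hx
  have hact : ∀ n, f1 (play tb f1 f2 v n) = clampAct G (x n) (σ n x) := by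
    intro n
    rw [hf1, toStrat]
    rw [← hf1, play_length, play_init]
    congr 1
    apply hσ
    intro i hi
    rw [play_take tb f1 f2 v n i hi]
    rfl
  refine hw x ?_ ?_
  · simp [hx, visit, play, Hist.cur, Hist.pay1]
  · intro n
    rw [← hact n]
    rcases play_succ_cases tb f1 f2 v n with ⟨hc, hp⟩ | ⟨hle, hc, hp⟩
    · left
      simp only [hx, visit, hc, hp, Prod.mk.injEq, true_and]
      ring
    · right
      obtain ⟨_, hb, he⟩ := hf2 tb f1 v n
      simp only [hx, visit, hc, hp, Hist.pay2] at *
      exact ⟨he, by linarith, by linarith⟩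

/-! ### Exchanging the players -/

/-- Exchange the roles of the players in a round. -/
def swapRound {V : Type} (r : BidRound V) : BidRound V := ⟨r.dest, r.bid, !r.p1Won⟩

/-- Exchange the roles of the players in a history. -/
def swapHist {V : Type} (h : Hist V) : Hist V := ⟨h.init, h.rounds.map swapRound⟩

lemma swapHist_swapHist {V : Type} (h : Hist V) : swapHist (swapHist h) = h := by
  have : (swapRound ∘ swapRound : BidRound V → BidRound V) = id := by
    funext r
    simp [swapRound]
  simp [swapHist, this]

lemma cur_swapHist {V : Type} (h : Hist V) : (swapHist h).cur = h.cur := by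
  unfold Hist.cur swapHist
  rw [List.getLast?_map]
  cases h.rounds.getLast? <;> rfl

lemma pay1_swapHist {V : Type} (h : Hist V) : (swapHist h).pay1 = h.pay2 := by
  obtain ⟨v, l⟩ := h
  unfold Hist.pay2 Hist.pay1 swapHist
  induction l with
  | nil => simp
  | cons r l ih =>
    simp only [List.map_cons, List.sum_cons] at ih ⊢
    rw [ih]
    cases hr : r.p1Won <;> simp [swapRound, hr] <;> ring

/-- Exchange the roles of the players in a strategy. -/
def swapStrat {V : Type} (f : Strat V) : Strat V := fun h => f (swapHist h)

/-- Exchange the roles of the players in a tie-breaking mechanism. -/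
def swapTie {V : Type} (tb : TieBreak V) : TieBreak V := fun h => !tb (swapHist h)

lemma swapStrat_swapStrat {V : Type} (f : Strat V) : swapStrat (swapStrat f) = f := by
  funext h
  simp [swapStrat, swapHist_swapHist]

lemma play_swap {V : Type} (tb : TieBreak V) (f1 f2 : Strat V) (v : V) (n : ℕ) :
    play (swapTie tb) (swapStrat f2) (swapStrat f1) v n = swapHist (play tb f1 f2 v n) := by
  induction n with
  | zero => rfl
  | succ n ih =>
    rw [play, ih, play]
    generalize play tb f1 f2 v n = h
    unfold extend
    simp only [swapStrat, swapTie, swapHist_swapHist]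
    by_cases hc : (f2 h).1 < (f1 h).1 ∨ ((f1 h).1 = (f2 h).1 ∧ tb h = true)
    · rw [if_pos hc, if_neg]
      · simp [swapHist, swapRound]
      · rintro (h1 | ⟨h1, h2⟩)
        · rcases hc with hc | hc
          · exact lt_asymm h1 hc
          · exact h1.ne hc.1
        · rcases hc with hc | hc
          · exact hc.ne h1
          · simp [hc.2] at h2
    · rw [if_neg hc, if_pos]
      · simp [swapHist, swapRound]
      · push Not at hc
        rcases lt_or_eq_of_le hc.1 with h1 | h1
        · exact Or.inl h1
        · exact Or.inr ⟨h1.symm, by simpa using hc.2 h1⟩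

lemma legal2_swapStrat {V : Type} [Fintype V] {G : BiddingGame V} {f : Strat V} {B : ℝ}
    (hf : Legal1 G f B) : Legal2 G (swapStrat f) B := by
  intro tb f1 v n
  have hp := play_swap tb f1 (swapStrat f) v n
  rw [swapStrat_swapStrat] at hp
  have := hf (swapTie tb) (swapStrat f1) v n
  rw [hp, pay1_swapHist, cur_swapHist] at this
  exact this

lemma Secures.player2 {V : Type} [Fintype V] {G : BiddingGame V} {Win : (ℕ → V) → Prop}
    {v : V} {B : ℝ} (h : Secures G Win v B) (hB : 0 ≤ B) (tb : TieBreak V) :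
    ∃ f2 : Strat V, Legal2 G f2 B ∧
      ∀ f1 : Strat V, Legal1 G f1 (1 - B) → Win (visit tb f1 f2 v) := by
  obtain ⟨f, hf, hw⟩ := h.player1 hB (swapTie tb)
  refine ⟨swapStrat f, legal2_swapStrat hf, fun f1 hf1 => ?_⟩
  have hv : visit tb f1 (swapStrat f) v = visit (swapTie tb) f (swapStrat f1) v := by
    funext n
    have hp := play_swap tb f1 (swapStrat f) v n
    rw [swapStrat_swapStrat] at hp
    rw [visit, visit, hp, cur_swapHist]
  rw [hv]
  exact hw _ (legal2_swapStrat hf1)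

/-! ### Thresholds for tail objectives -/

lemma Secures.step {V : Type} [Fintype V] {G : BiddingGame V} {Win : (ℕ → V) → Prop}
    (htail : ∀ x : ℕ → V, Win (fun n => x (n + 1)) → Win x) {v a : V} {B b : ℝ}
    (hb0 : 0 ≤ b) (hbB : b ≤ B) (ha : G.E v a) (hwin : Secures G Win a (B - b))
    (hlose : ∀ u, G.E v u → ∀ B', B + b ≤ B' → B' ≤ 1 → Secures G Win u B') :
    Secures G Win v B := by
  set g : V × ℝ → ℕ → (ℕ → V × ℝ) → ℝ × V := fun p =>
    if h : Secures G Win p.1 p.2 then Classical.choose h else fun _ _ => (0, a) with hg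
  have hg_spec : ∀ p : V × ℝ, Secures G Win p.1 p.2 → Causal (g p) ∧
      ∀ x : ℕ → V × ℝ, x 0 = p → Consistent G (g p) x → Win (fun n => (x n).1) := by
    intro p hp
    simp only [hg, dif_pos hp]
    exact Classical.choose_spec hp
  have hg_causal : ∀ p, Causal (g p) := by
    intro p
    by_cases hp : Secures G Win p.1 p.2
    · exact (hg_spec p hp).1
    · simp only [hg, dif_neg hp]
      intro n x y _
      rfl
  refine ⟨fun n x => Nat.casesOn n (b, a) fun m => g (x 1) m fun i => x (i + 1), ?_, ?_⟩
  · intro n x y hxy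
    cases n with
    | zero => rfl
    | succ m =>
      change g (x 1) m (fun i => x (i + 1)) = g (y 1) m (fun i => y (i + 1))
      rw [hxy 1 (by omega)]
      exact hg_causal _ _ _ _ fun i hi => hxy (i + 1) (by omega)
  · intro x hx0 hx
    have h1 : Secures G Win (x 1).1 (x 1).2 := by
      have h := hx 0
      rw [hx0] at h
      change x 1 = ((clampAct G (v, B) (b, a)).2, B - (clampAct G (v, B) (b, a)).1) ∨
        (G.E v (x 1).1 ∧ B + (clampAct G (v, B) (b, a)).1 ≤ (x 1).2 ∧ (x 1).2 ≤ 1) at h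
      rw [clampAct_eq G (v, B) (b, a) hb0 hbB ha] at h
      rcases h with h | ⟨he, hle, h1⟩
      · rw [h]
        exact hwin
      · exact hlose _ he _ hle h1
    refine htail (fun n => (x n).1) ((hg_spec (x 1) h1).2 (fun i => x (i + 1)) rfl ?_)
    intro n
    exact hx (n + 1)

/-- The largest value of `f` on the successors of `v`. -/
noncomputable def maxSucc {V : Type} [Fintype V] (G : BiddingGame V) (f : V → ℝ) (v : V) : ℝ :=
  (G.adj v).sup' (G.adj_nonempty v) f

/-- The smallest value of `f` on the successors of `v`. -/
noncomputable def minSucc {V : Type} [Fintype V] (G : BiddingGame V) (f : V → ℝ) (v : V) : ℝ :=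
  (G.adj v).inf' (G.adj_nonempty v) f

lemma mem_adj {V : Type} [Fintype V] {G : BiddingGame V} {v u : V} : u ∈ G.adj v ↔ G.E v u := by
  simp [BiddingGame.adj]

lemma le_maxSucc {V : Type} [Fintype V] {G : BiddingGame V} (f : V → ℝ) {v u : V}
    (h : G.E v u) : f u ≤ maxSucc G f v := Finset.le_sup' f (mem_adj.2 h)

lemma minSucc_le {V : Type} [Fintype V] {G : BiddingGame V} (f : V → ℝ) {v u : V}
    (h : G.E v u) : minSucc G f v ≤ f u := Finset.inf'_le f (mem_adj.2 h)

lemma exists_maxSucc {V : Type} [Fintype V] (G : BiddingGame V) (f : V → ℝ) (v : V) :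
    ∃ u, G.E v u ∧ f u = maxSucc G f v := by
  obtain ⟨u, hu, h⟩ := Finset.exists_mem_eq_sup' (G.adj_nonempty v) f
  exact ⟨u, mem_adj.1 hu, h.symm⟩

lemma exists_minSucc {V : Type} [Fintype V] (G : BiddingGame V) (f : V → ℝ) (v : V) :
    ∃ u, G.E v u ∧ f u = minSucc G f v := by
  obtain ⟨u, hu, h⟩ := Finset.exists_mem_eq_inf' (G.adj_nonempty v) f
  exact ⟨u, mem_adj.1 hu, h.symm⟩

lemma minSucc_le_maxSucc {V : Type} [Fintype V] (G : BiddingGame V) (f : V → ℝ) (v : V) :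
    minSucc G f v ≤ maxSucc G f v := by
  obtain ⟨u, hu, h⟩ := exists_minSucc G f v
  rw [← h]
  exact le_maxSucc f hu

/-- The budgets above which the objective `Win` can be secured from `v`. -/
def secureBounds {V : Type} [Fintype V] (G : BiddingGame V) (Win : (ℕ → V) → Prop)
    (v : V) : Set ℝ :=
  {τ | τ ∈ Set.Icc (0 : ℝ) 1 ∧ ∀ B, τ < B → B ≤ 1 → Secures G Win v B}

/-- The infimum of the budgets with which the objective `Win` can be secured from `v`. -/
noncomputable def secureThresh {V : Type} [Fintype V] (G : BiddingGame V)
    (Win : (ℕ → V) → Prop) (v : V) : ℝ := sInf (secureBounds G Win v)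

lemma one_mem_secureBounds {V : Type} [Fintype V] (G : BiddingGame V) (Win : (ℕ → V) → Prop)
    (v : V) : (1 : ℝ) ∈ secureBounds G Win v :=
  ⟨by simp, fun _ h h' => absurd h h'.not_gt⟩

lemma bddBelow_secureBounds {V : Type} [Fintype V] (G : BiddingGame V)
    (Win : (ℕ → V) → Prop) (v : V) : BddBelow (secureBounds G Win v) :=
  ⟨0, fun _ h => h.1.1⟩

lemma secureThresh_le {V : Type} [Fintype V] {G : BiddingGame V} {Win : (ℕ → V) → Prop}
    {v : V} {τ : ℝ} (h : τ ∈ secureBounds G Win v) : secureThresh G Win v ≤ τ :=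
  csInf_le (bddBelow_secureBounds G Win v) h

lemma secureThresh_mem {V : Type} [Fintype V] (G : BiddingGame V) (Win : (ℕ → V) → Prop)
    (v : V) : secureThresh G Win v ∈ Set.Icc (0 : ℝ) 1 :=
  ⟨le_csInf ⟨1, one_mem_secureBounds G Win v⟩ fun _ h => h.1.1,
    secureThresh_le (one_mem_secureBounds G Win v)⟩

lemma secures_of_secureThresh_lt {V : Type} [Fintype V] {G : BiddingGame V}
    {Win : (ℕ → V) → Prop} {v : V} {B : ℝ} (h : secureThresh G Win v < B) (hB : B ≤ 1) :
    Secures G Win v B := by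
  obtain ⟨τ, hτ, hlt⟩ := exists_lt_of_csInf_lt ⟨1, one_mem_secureBounds G Win v⟩ h
  exact hτ.2 B hlt hB

lemma secureThresh_le_average {V : Type} [Fintype V] (G : BiddingGame V)
    {Win : (ℕ → V) → Prop} (htail : ∀ x : ℕ → V, Win (fun n => x (n + 1)) → Win x) (v : V) :
    secureThresh G Win v ≤
      (maxSucc G (secureThresh G Win) v + minSucc G (secureThresh G Win) v) / 2 := by
  obtain ⟨a, ha, hamin⟩ := exists_minSucc G (secureThresh G Win) v
  obtain ⟨c, hc, hcmax⟩ := exists_maxSucc G (secureThresh G Win) v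
  have hle := minSucc_le_maxSucc G (secureThresh G Win) v
  have ha' := secureThresh_mem G Win a
  have hc' := secureThresh_mem G Win c
  rw [hamin] at ha'
  rw [hcmax] at hc'
  apply secureThresh_le
  refine ⟨⟨by linarith [ha'.1, hc'.1], by linarith [ha'.2, hc'.2]⟩, fun B hB hB1 => ?_⟩
  refine Secures.step htail
    (b := (maxSucc G (secureThresh G Win) v - minSucc G (secureThresh G Win) v) / 2)
    (by linarith) (by linarith [ha'.1]) ha ?_ ?_
  · exact secures_of_secureThresh_lt (by rw [hamin]; linarith) (by linarith)
  · intro u hu B' hB' hB'1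
    exact secures_of_secureThresh_lt (by linarith [le_maxSucc (secureThresh G Win) hu]) hB'1

/-- The set `C` cannot be left. -/
def IsClosedSet {V : Type} [Fintype V] (G : BiddingGame V) (C : Finset V) : Prop :=
  ∀ v ∈ C, ∀ u, G.E v u → u ∈ C

lemma add_le_one_of_le_average {V : Type} [Fintype V] (G : BiddingGame V) {t s : V → ℝ}
    (ht : ∀ v, t v ≤ (maxSucc G t v + minSucc G t v) / 2)
    (hs : ∀ v, s v ≤ (maxSucc G s v + minSucc G s v) / 2)
    (hC : ∀ C : Finset V, C.Nonempty → IsClosedSet G C → ∃ v ∈ C, t v + s v ≤ 1) (v : V) :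
    t v + s v ≤ 1 := by
  obtain ⟨v₁, _, h₁⟩ := Finset.exists_max_image Finset.univ (fun u => t u + s u)
    ⟨v, Finset.mem_univ v⟩
  obtain ⟨v₂, hv₂, h₂⟩ := Finset.exists_max_image
    (Finset.univ.filter fun u => t u + s u = t v₁ + s v₁) t ⟨v₁, by simp⟩
  simp only [Finset.mem_filter, Finset.mem_univ, true_and, forall_const] at h₁ hv₂ h₂
  obtain ⟨u, hu, hle⟩ := hC
    (Finset.univ.filter fun u => t u + s u = t v₁ + s v₁ ∧ t u = t v₂) ⟨v₂, by simp [hv₂]⟩ (by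
      intro x hx y hxy
      simp only [Finset.mem_filter, Finset.mem_univ, true_and] at hx ⊢
      obtain ⟨a, ha, hat⟩ := exists_maxSucc G t x
      obtain ⟨c, hc, hcs⟩ := exists_maxSucc G s x
      have e1 := ht x
      have e2 := hs x
      have e3 := minSucc_le s ha
      have e4 := minSucc_le t hc
      have e5 := h₁ a
      have e6 := h₁ c
      have e7 : t a ≤ t v₂ := h₂ a (by linarith)
      have e8 := minSucc_le t hxy
      have e9 := le_maxSucc t hxy
      have e10 := minSucc_le s hxy
      have e11 := le_maxSucc s hxy
      exact ⟨by linarith, by linarith⟩)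
  simp only [Finset.mem_filter, Finset.mem_univ, true_and] at hu
  linarith [h₁ v, hu.1]

/-! ### Potentials for the random-turn game -/

/-- One step of value iteration for the random-turn game with weights `u`. -/
noncomputable def richStep {V : Type} [Fintype V] (G : BiddingGame V) (u f : V → ℝ) (v : V) : ℝ :=
  u v + (maxSucc G f v + minSucc G f v) / 2

lemma richStep_le {V : Type} [Fintype V] {G : BiddingGame V} (u : V → ℝ) {f g : V → ℝ} {c : ℝ}
    {v : V} (h : ∀ a, G.E v a → f a ≤ g a + c) : richStep G u f v ≤ richStep G u g v + c := by
  obtain ⟨a, ha, hf⟩ := exists_maxSucc G f v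
  obtain ⟨b, hb, hg⟩ := exists_minSucc G g v
  unfold richStep
  linarith [h a ha, h b hb, le_maxSucc g ha, minSucc_le f hb]

/-- The value of the random-turn game with horizon `k`. -/
noncomputable def richIter {V : Type} [Fintype V] (G : BiddingGame V) (u : V → ℝ) : ℕ → V → ℝ
  | 0 => fun _ => 0
  | k + 1 => richStep G u (richIter G u k)

lemma richIter_succ_le {V : Type} [Fintype V] (G : BiddingGame V) {u : V → ℝ} {W : ℝ}
    (hW : ∀ v, |u v| ≤ W) (k : ℕ) (v : V) :
    richIter G u (k + 1) v ≤ richIter G u k v + W ∧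
      richIter G u k v ≤ richIter G u (k + 1) v + W := by
  induction k generalizing v with
  | zero =>
    obtain ⟨a, _, hf⟩ := exists_maxSucc G (fun _ => (0 : ℝ)) v
    obtain ⟨b, _, hg⟩ := exists_minSucc G (fun _ => (0 : ℝ)) v
    have := abs_le.1 (hW v)
    simp only [richIter, richStep, ← hf, ← hg]
    constructor <;> linarith
  | succ k ih =>
    exact ⟨richStep_le u fun a _ => (ih a).1, richStep_le u fun a _ => (ih a).2⟩

lemma richStep_neg {V : Type} [Fintype V] (G : BiddingGame V) (u f : V → ℝ) (c d : ℝ) (v : V) :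
    richStep G (fun a => -u a + c) (fun a => -f a + d) v = -richStep G u f v + c + d := by
  obtain ⟨a, ha, hf⟩ := exists_maxSucc G f v
  obtain ⟨b, hb, hg⟩ := exists_minSucc G f v
  obtain ⟨a', ha', hf'⟩ := exists_maxSucc G (fun a => -f a + d) v
  obtain ⟨b', hb', hg'⟩ := exists_minSucc G (fun a => -f a + d) v
  have h1 := le_maxSucc f hb'
  have h2 := minSucc_le f ha'
  have h3 := le_maxSucc (fun a => -f a + d) hb
  have h4 := minSucc_le (fun a => -f a + d) ha
  unfold richStep
  linarith

lemma richIter_neg {V : Type} [Fintype V] (G : BiddingGame V) (u : V → ℝ) (c : ℝ) (k : ℕ) :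
    richIter G (fun a => -u a + c) k = fun v => -richIter G u k v + k * c := by
  induction k with
  | zero => simp [richIter]
  | succ k ih =>
    funext v
    rw [richIter, ih, richStep_neg, richIter]
    push_cast
    ring

lemma exists_potential_of_richIter_nonpos {V : Type} [Fintype V] {G : BiddingGame V} {u : V → ℝ}
    {C : Finset V} {k : ℕ} (hk : k ≠ 0) (h : ∀ v ∈ C, richIter G u k v ≤ 0) :
    ∃ f : V → ℝ, ∀ v ∈ C, richStep G u f v ≤ f v := by
  have hne : (Finset.range k).Nonempty := by simpa using hk
  set f : V → ℝ := fun v => (Finset.range k).inf' hne fun j => richIter G u j v with hf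
  have hle : ∀ j < k, ∀ v, f v ≤ richIter G u j v := fun j hj v =>
    Finset.inf'_le (fun j => richIter G u j v) (Finset.mem_range.2 hj)
  have hstep : ∀ j < k, ∀ v, richStep G u f v ≤ richIter G u (j + 1) v := by
    intro j hj v
    have := richStep_le (G := G) u (v := v) (c := 0) fun a _ => by simpa using hle j hj a
    simpa [richIter] using this
  refine ⟨f, fun v hv => Finset.le_inf' _ _ fun j hj => ?_⟩
  rw [Finset.mem_range] at hj
  cases j with
  | zero =>
    obtain ⟨m, rfl⟩ := Nat.exists_eq_succ_of_ne_zero hk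
    exact (hstep m (by omega) v).trans (h v hv)
  | succ i => exact hstep i (by omega) v

lemma exists_potential_of_bounded {V : Type} [Fintype V] {G : BiddingGame V} {u : V → ℝ}
    {C : Finset V} (hC : IsClosedSet G C) {K : ℝ}
    (h : ∀ k, ∀ v ∈ C, |richIter G u k v| ≤ K) :
    ∃ f : V → ℝ, ∀ v ∈ C, richStep G u f v ≤ f v := by
  set f : V → ℝ := fun v => Filter.liminf (fun k => richIter G u k v) Filter.atTop with hf
  have hbelow : ∀ v ∈ C,
      Filter.IsBoundedUnder (· ≥ ·) Filter.atTop fun k => richIter G u k v := fun v hv =>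
    Filter.isBoundedUnder_of ⟨-K, fun k => (abs_le.1 (h k v hv)).1⟩
  have habove : ∀ v ∈ C,
      Filter.IsBoundedUnder (· ≤ ·) Filter.atTop fun k => richIter G u k v := fun v hv =>
    Filter.isBoundedUnder_of ⟨K, fun k => (abs_le.1 (h k v hv)).2⟩
  refine ⟨f, fun v hv => le_of_forall_pos_le_add fun ε hε => ?_⟩
  have hev : ∀ᶠ k in Filter.atTop, ∀ a ∈ C, f a ≤ richIter G u k a + ε := by
    rw [Filter.eventually_all_finset]
    intro a ha
    have hlt : f a - ε < Filter.liminf (fun k => richIter G u k a) Filter.atTop := by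
      change f a - ε < f a
      linarith
    filter_upwards [Filter.eventually_lt_of_lt_liminf hlt (hbelow a ha)] with k hk
    linarith
  obtain ⟨N, hN⟩ := Filter.eventually_atTop.1 hev
  have : richStep G u f v - ε ≤ f v := by
    refine Filter.le_liminf_of_le (habove v hv).isCoboundedUnder_ge ?_
    refine Filter.eventually_atTop.2 ⟨N + 1, fun k hk => ?_⟩
    obtain ⟨m, rfl⟩ : ∃ m, k = m + 1 := ⟨k - 1, by omega⟩
    have := richStep_le (G := G) u (v := v) (c := ε) fun a ha => hN m (by omega) a (hC v hv a ha)
    rw [richIter]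
    linarith
  linarith

lemma exists_span_bound {V : Type} [Fintype V] {G : BiddingGame V} (u : V → ℝ)
    {C : Finset V} (hC : IsClosedSet G C)
    (hconn : ∀ v ∈ C, ∀ a ∈ C, Relation.ReflTransGen G.E v a) :
    ∃ K : ℝ, ∀ k, ∀ v ∈ C, ∀ a ∈ C, richIter G u k v - richIter G u k a ≤ K := by
  obtain ⟨W, hW⟩ := (Set.finite_range fun v => |u v|).bddAbove
  have hW : ∀ v, |u v| ≤ W := fun v => hW ⟨v, rfl⟩
  have hpair : ∀ p : V × V, ∃ K : ℝ, p.1 ∈ C → p.2 ∈ C → ∀ k,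
      (∀ a ∈ C, richIter G u k p.1 ≤ richIter G u k a) →
        richIter G u k p.2 - richIter G u k p.1 ≤ K := by
    rintro ⟨a, b⟩
    by_cases hab : a ∈ C ∧ b ∈ C
    swap
    · exact ⟨0, fun h1 h2 => absurd ⟨h1, h2⟩ hab⟩
    · obtain ⟨ha, hb⟩ := hab
      have key : ∃ K : ℝ, b ∈ C ∧ ∀ k, (∀ c ∈ C, richIter G u k a ≤ richIter G u k c) →
          richIter G u k b - richIter G u k a ≤ K := by
        have hr := hconn a ha b hb
        clear hb
        induction hr with
        | refl => exact ⟨0, ha, fun k _ => by simp⟩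
        | @tail c d _ hcd ih =>
          obtain ⟨K, hc, hK⟩ := ih
          refine ⟨2 * K + 4 * W, hC c hc d hcd, fun k hk => ?_⟩
          have e1 := hK k hk
          have e2 := (richIter_succ_le G hW k c).1
          have e3 := abs_le.1 (hW c)
          have e4 := le_maxSucc (richIter G u k) hcd
          obtain ⟨m, hm, hmin⟩ := exists_minSucc G (richIter G u k) c
          have e5 := hk m (hC c hc m hm)
          rw [richIter, richStep] at e2
          linarith
      obtain ⟨K, _, hK⟩ := key
      exact ⟨K, fun _ _ => hK⟩
  choose Kf hKf using hpair
  obtain ⟨K, hK⟩ := (Set.finite_range Kf).bddAbove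
  refine ⟨K, fun k v hv a ha => ?_⟩
  obtain ⟨m, hm, hmin⟩ := Finset.exists_min_image C (richIter G u k) ⟨v, hv⟩
  have e1 := hKf (m, v) hm hv k hmin
  have e2 := hK ⟨(m, v), rfl⟩
  have e3 := hmin a ha
  dsimp only at e1
  linarith

lemma exists_potential {V : Type} [Fintype V] {G : BiddingGame V} (u : V → ℝ)
    {C : Finset V} (hne : C.Nonempty) (hC : IsClosedSet G C)
    (hconn : ∀ v ∈ C, ∀ a ∈ C, Relation.ReflTransGen G.E v a) :
    (∃ f : V → ℝ, ∀ v ∈ C, richStep G u f v ≤ f v) ∨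
      ∃ δ > 0, ∃ f : V → ℝ, ∀ v ∈ C, richStep G (fun a => -u a + δ) f v ≤ f v := by
  by_cases hpos : ∃ k, ∀ v ∈ C, 0 < richIter G u k v
  · right
    obtain ⟨k, hk⟩ := hpos
    have hk0 : k ≠ 0 := by
      rintro rfl
      obtain ⟨v, hv⟩ := hne
      simpa [richIter] using hk v hv
    obtain ⟨m, hm, hmin⟩ := Finset.exists_min_image C (richIter G u k) hne
    have hk' : (0 : ℝ) < k := by exact_mod_cast Nat.pos_of_ne_zero hk0
    refine ⟨richIter G u k m / k, div_pos (hk m hm) hk',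
      exists_potential_of_richIter_nonpos hk0 fun v hv => ?_⟩
    rw [richIter_neg]
    have := hmin v hv
    rw [mul_div_cancel₀ _ hk'.ne']
    linarith
  · left
    by_cases hneg : ∃ k, k ≠ 0 ∧ ∀ v ∈ C, richIter G u k v ≤ 0
    · obtain ⟨k, hk0, hk⟩ := hneg
      exact exists_potential_of_richIter_nonpos hk0 hk
    · push Not at hpos hneg
      obtain ⟨K, hK⟩ := exists_span_bound u hC hconn
      refine exists_potential_of_bounded hC (K := K) fun k v hv => abs_le.2 ?_
      obtain ⟨a, ha, ha'⟩ := hpos k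
      have e1 := hK k v hv a ha
      rcases Nat.eq_zero_or_pos k with rfl | hk0
      · have e2 := hK 0 v hv v hv
        simp only [richIter, sub_self] at e2 ⊢
        exact ⟨by linarith, e2⟩
      · obtain ⟨b, hb, hb'⟩ := hneg k hk0.ne'
        have e2 := hK k b hb v hv
        exact ⟨by linarith, by linarith⟩

lemma exists_strongly_connected_subset {V : Type} [Fintype V] {G : BiddingGame V}
    {C : Finset V} (hne : C.Nonempty) (hC : IsClosedSet G C) :
    ∃ D ⊆ C, D.Nonempty ∧ IsClosedSet G D ∧
      ∀ v ∈ D, ∀ a ∈ D, Relation.ReflTransGen G.E v a := by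
  obtain ⟨D, hD, hmin⟩ := Finset.exists_min_image
    (C.powerset.filter fun D => D.Nonempty ∧ IsClosedSet G D) Finset.card
    ⟨C, by simp [hne, hC]⟩
  simp only [Finset.mem_filter, Finset.mem_powerset] at hD hmin
  refine ⟨D, hD.1, hD.2.1, hD.2.2, fun v hv a ha => ?_⟩
  have hsub : D.filter (fun b => Relation.ReflTransGen G.E v b) ⊆ D := Finset.filter_subset _ _
  have hcard := hmin (D.filter fun b => Relation.ReflTransGen G.E v b)
    ⟨hsub.trans hD.1, ⟨v, by simp [hv, Relation.ReflTransGen.refl]⟩, fun b hb c hbc => by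
      rw [Finset.mem_filter] at hb ⊢
      exact ⟨hD.2.2 b hb.1 c hbc, hb.2.tail hbc⟩⟩
  have heq := Finset.eq_of_subset_of_card_le hsub hcard
  rw [← heq] at ha
  exact (Finset.mem_filter.1 ha).2

/-! ### Strategies from potentials -/

/-- Half the range of `f` over the successors of `v`. -/
noncomputable def halfGap {V : Type} [Fintype V] (G : BiddingGame V) (f : V → ℝ) (v : V) : ℝ :=
  (maxSucc G f v - minSucc G f v) / 2

lemma halfGap_nonneg {V : Type} [Fintype V] (G : BiddingGame V) (f : V → ℝ) (v : V) :
    0 ≤ halfGap G f v := by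
  have := minSucc_le_maxSucc G f v
  unfold halfGap
  linarith

lemma exists_halfGap_le {V : Type} [Fintype V] (G : BiddingGame V) (f : V → ℝ) :
    ∃ S, 0 ≤ S ∧ ∀ v, halfGap G f v ≤ S :=
  ⟨∑ v, halfGap G f v, Finset.sum_nonneg fun v _ => halfGap_nonneg G f v, fun v =>
    Finset.single_le_sum (fun v _ => halfGap_nonneg G f v) (Finset.mem_univ v)⟩

/-- A successor of `v` at which `f` is minimal. -/
noncomputable def argminSucc {V : Type} [Fintype V] (G : BiddingGame V) (f : V → ℝ) (v : V) : V :=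
  Classical.choose (exists_minSucc G f v)

lemma argminSucc_edge {V : Type} [Fintype V] (G : BiddingGame V) (f : V → ℝ) (v : V) :
    G.E v (argminSucc G f v) := (Classical.choose_spec (exists_minSucc G f v)).1

lemma add_argminSucc_le {V : Type} [Fintype V] {G : BiddingGame V} {u f : V → ℝ} {v : V}
    (h : richStep G u f v ≤ f v) : u v + f (argminSucc G f v) ≤ f v - halfGap G f v := by
  have := (Classical.choose_spec (exists_minSucc G f v)).2
  unfold argminSucc halfGap
  unfold richStep at h
  rw [this]
  linarith

lemma add_succ_le {V : Type} [Fintype V] {G : BiddingGame V} {u f : V → ℝ} {v a : V}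
    (h : richStep G u f v ≤ f v) (ha : G.E v a) : u v + f a ≤ f v + halfGap G f v := by
  have := le_maxSucc f ha
  unfold halfGap
  unfold richStep at h
  linarith

/-- The accumulated weight plus the potential of the current vertex. -/
def potential {V : Type} (u f : V → ℝ) (x : ℕ → V × ℝ) (n : ℕ) : ℝ :=
  ∑ i ∈ Finset.range n, u (x i).1 + f (x n).1

lemma potential_congr {V : Type} (u f : V → ℝ) {x y : ℕ → V × ℝ} {n : ℕ}
    (h : ∀ i ≤ n, x i = y i) : potential u f x n = potential u f y n := by
  unfold potential
  rw [h n le_rfl]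
  congr 1
  exact Finset.sum_congr rfl fun i hi => by rw [h i (Finset.mem_range.1 hi).le]

lemma potential_succ {V : Type} (u f : V → ℝ) (x : ℕ → V × ℝ) (n : ℕ) :
    potential u f x (n + 1) =
      potential u f x n + (u (x n).1 + f (x (n + 1)).1 - f (x n).1) := by
  unfold potential
  rw [Finset.sum_range_succ]
  ring

lemma exists_le_potential {V : Type} [Fintype V] (u f : V → ℝ) :
    ∃ M, ∀ x n, ∑ i ∈ Finset.range n, u (x i : V × ℝ).1 ≤ potential u f x n + M := by
  refine ⟨∑ v, |f v|, fun x n => ?_⟩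
  have h1 := Finset.single_le_sum (f := fun v => |f v|) (fun v _ => abs_nonneg (f v))
    (Finset.mem_univ (x n).1)
  have h2 := neg_abs_le (f (x n).1)
  unfold potential
  linarith

/-- A player bidding `b n x` and moving to minimize `f` changes the potential as follows. -/
lemma Consistent.potential_step {V : Type} [Fintype V] {G : BiddingGame V} {u f : V → ℝ}
    {b : ℕ → (ℕ → V × ℝ) → ℝ} {x : ℕ → V × ℝ}
    (hx : Consistent G (fun n x => (b n x, argminSucc G f (x n).1)) x) {n : ℕ}
    (hf : richStep G u f (x n).1 ≤ f (x n).1) (h0 : 0 ≤ b n x) (h1 : b n x ≤ (x n).2) :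
    ((x (n + 1)).2 = (x n).2 - b n x ∧
      potential u f x (n + 1) ≤ potential u f x n - halfGap G f (x n).1) ∨
    ((x n).2 + b n x ≤ (x (n + 1)).2 ∧
      potential u f x (n + 1) ≤ potential u f x n + halfGap G f (x n).1) := by
  have hc := clampAct_eq G (x n) (b n x, argminSucc G f (x n).1) h0 h1 (argminSucc_edge G f _)
  have hn := hx n
  simp only [hc] at hn
  rcases hn with h | ⟨he, h, _⟩
  · left
    have := add_argminSucc_le hf
    rw [potential_succ, h]
    exact ⟨rfl, by linarith⟩
  · right
    have := add_succ_le hf he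
    rw [potential_succ]
    exact ⟨h, by linarith⟩

lemma Consistent.mem_closed {V : Type} [Fintype V] {G : BiddingGame V}
    {σ : ℕ → (ℕ → V × ℝ) → ℝ × V} {x : ℕ → V × ℝ} (hx : Consistent G σ x)
    {C : Finset V} (hC : IsClosedSet G C) (h0 : (x 0).1 ∈ C) (n : ℕ) : (x n).1 ∈ C := by
  induction n with
  | zero => exact h0
  | succ n ih => exact hC _ ih _ (hx.edge n)

lemma exp_sub_add_exp_neg_le_two {s η l : ℝ} (hl : 0 ≤ l) (h : l * s ^ 2 ≤ 2 * η) :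
    Real.exp (l * (s - η)) + Real.exp (-(l * (s + η))) ≤ 2 := by
  have h1 : Real.exp (l * (s - η)) + Real.exp (-(l * (s + η))) =
      2 * Real.cosh (l * s) * Real.exp (-(l * η)) := by
    rw [Real.cosh_eq, mul_div_cancel₀ _ two_ne_zero, add_mul, ← Real.exp_add, ← Real.exp_add]
    congr 2 <;> ring
  have h2 : Real.cosh (l * s) ≤ Real.exp (l * η) := by
    refine (Real.cosh_le_exp_half_sq _).trans (Real.exp_le_exp.2 ?_)
    nlinarith [mul_le_mul_of_nonneg_left h hl]
  calc _ = 2 * Real.cosh (l * s) * Real.exp (-(l * η)) := h1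
    _ ≤ 2 * Real.exp (l * η) * Real.exp (-(l * η)) := by gcongr
    _ = 2 := by rw [mul_assoc, ← Real.exp_add]; simp

lemma secures_linear_of_potential {V : Type} [Fintype V] {G : BiddingGame V} {u f : V → ℝ}
    {C : Finset V} (hC : IsClosedSet G C) {δ : ℝ} (hδ : 0 < δ)
    (hf : ∀ v ∈ C, richStep G (fun a => u a + δ) f v ≤ f v) {v : V} (hv : v ∈ C) {B : ℝ}
    (hB : 0 < B) (hB1 : B ≤ 1) :
    Secures G (fun y => ∃ η > 0, ∃ K, ∀ n : ℕ, ∑ i ∈ Finset.range n, u (y i) ≤ K - η * n) v B := by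
  obtain ⟨S, hS0, hS⟩ := exists_halfGap_le G f
  obtain ⟨M, hM⟩ := exists_le_potential (fun a => u a + δ) f
  set l : ℝ := δ / (S ^ 2 + 1) with hl
  have hl0 : 0 < l := by positivity
  have hlS : l * S ^ 2 ≤ δ := by
    rw [hl, div_mul_eq_mul_div, div_le_iff₀ (by positivity)]
    nlinarith [sq_nonneg S]
  set c : ℝ := B * Real.exp (-(l * f v)) with hc
  have hc0 : 0 < c := by positivity
  set A : ℕ → (ℕ → V × ℝ) → ℝ := fun n x =>
    c * Real.exp (l * (potential (fun a => u a + δ) f x n - δ / 2 * n)) with hA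
  set b : ℕ → (ℕ → V × ℝ) → ℝ := fun n x =>
    A n x * (1 - Real.exp (-(l * (halfGap G f (x n).1 + δ / 2)))) with hb
  refine ⟨fun n x => (b n x, argminSucc G f (x n).1), ?_, ?_⟩
  · intro n x y hxy
    simp only [hb, hA, potential_congr _ _ hxy, hxy n le_rfl]
  · intro x hx0 hx
    have hmem := hx.mem_closed hC (by rw [hx0]; exact hv)
    have hA0 : ∀ n, 0 < A n x := fun n => by positivity
    have hinv : ∀ n, A n x ≤ (x n).2 := by
      intro n
      induction n with
      | zero =>
        simp only [hA, potential, hx0, hc, Finset.range_zero, Finset.sum_empty, zero_add,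
          Nat.cast_zero, mul_zero, sub_zero]
        rw [mul_assoc, ← Real.exp_add]
        simp
      | succ n ih =>
        have hs0 := halfGap_nonneg G f (x n).1
        have hsS := hS (x n).1
        set s := halfGap G f (x n).1 with hs
        have he1 : Real.exp (-(l * (s + δ / 2))) ≤ 1 := by
          rw [Real.exp_le_one_iff]
          have : 0 ≤ l * (s + δ / 2) := by positivity
          linarith
        have he2 := exp_sub_add_exp_neg_le_two (s := s) (η := δ / 2) hl0.le (by
          have : l * s ^ 2 ≤ l * S ^ 2 := by gcongr
          linarith)
        have he0 := Real.exp_pos (-(l * (s + δ / 2)))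
        have hb0 : 0 ≤ b n x := mul_nonneg (hA0 n).le (by linarith)
        have hb1 : b n x ≤ A n x := by
          have : 0 ≤ A n x * Real.exp (-(l * (s + δ / 2))) := by have := hA0 n; positivity
          simp only [hb]
          linarith
        have hgrow : ∀ d, potential (fun a => u a + δ) f x (n + 1) ≤
            potential (fun a => u a + δ) f x n + d →
            A (n + 1) x ≤ A n x * Real.exp (l * (d - δ / 2)) := by
          intro d hd
          simp only [hA]
          clear_value c
          rw [mul_assoc, ← Real.exp_add]
          refine mul_le_mul_of_nonneg_left (Real.exp_le_exp.2 ?_) hc0.le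
          push_cast
          rw [← mul_add]
          exact mul_le_mul_of_nonneg_left (by linarith) hl0.le
        rcases hx.potential_step (hf _ (hmem n)) hb0 (hb1.trans ih) with ⟨h1, h2⟩ | ⟨h1, h2⟩
        · have h3 := hgrow (-s) (by linarith)
          have h4 : l * (-s - δ / 2) = -(l * (s + δ / 2)) := by ring
          rw [h4] at h3
          rw [h1]
          simp only [hb]
          linarith
        · have h3 := hgrow s h2
          have h4 := mul_le_mul_of_nonneg_left he2 (hA0 n).le
          refine le_trans ?_ h1
          simp only [hb]
          linarith
    refine ⟨δ / 2, by positivity, -Real.log c / l + M, fun n => ?_⟩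
    have h1 := (hinv n).trans (hx.budget_mem (by rw [hx0]; exact hB.le) (by rw [hx0]; exact hB1) n).2
    have h2 := Real.log_le_log (hA0 n) h1
    simp only [hA] at h2
    rw [Real.log_mul hc0.ne' (Real.exp_pos _).ne', Real.log_exp, Real.log_one] at h2
    have h3 : potential (fun a => u a + δ) f x n - δ / 2 * n ≤ -Real.log c / l := by
      rw [le_div_iff₀ hl0]
      linarith
    have h4 := hM x n
    rw [Finset.sum_add_distrib] at h4
    simp only [Finset.sum_const, Finset.card_range, nsmul_eq_mul] at h4
    linarith

/-- A reference budget that is reset whenever the budget has dropped to half of it. -/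
noncomputable def refBudget {V : Type} (x : ℕ → V × ℝ) : ℕ → ℝ
  | 0 => (x 0).2
  | n + 1 => if (x (n + 1)).2 ≤ refBudget x n / 2 then (x (n + 1)).2 else refBudget x n

lemma refBudget_congr {V : Type} {x y : ℕ → V × ℝ} {n : ℕ} (h : ∀ i ≤ n, x i = y i) :
    refBudget x n = refBudget y n := by
  induction n with
  | zero => simp only [refBudget, h 0 le_rfl]
  | succ n ih => simp only [refBudget, h (n + 1) le_rfl, ih fun i hi => h i (by omega)]

lemma secures_frequently_bounded_of_potential {V : Type} [Fintype V] {G : BiddingGame V}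
    {u f : V → ℝ} {C : Finset V} (hC : IsClosedSet G C)
    (hf : ∀ v ∈ C, richStep G u f v ≤ f v) {v : V} (hv : v ∈ C) {B : ℝ}
    (hB : 0 < B) (hB1 : B ≤ 1) :
    Secures G (fun y => ∃ K, ∃ᶠ n in Filter.atTop, ∑ i ∈ Finset.range n, u (y i) ≤ K) v B := by
  obtain ⟨S, hS0, hS⟩ := exists_halfGap_le G f
  obtain ⟨M, hM⟩ := exists_le_potential u f
  set k : ℝ := 1 / (4 * (S + 1)) with hk
  have hk0 : 0 < k := by positivity
  have hkS : k * S ≤ 1 / 4 := by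
    rw [hk, div_mul_eq_mul_div, div_le_div_iff₀ (by positivity) (by norm_num)]
    linarith
  set b : ℕ → (ℕ → V × ℝ) → ℝ := fun n x => k * refBudget x n * halfGap G f (x n).1 with hb
  refine ⟨fun n x => (b n x, argminSucc G f (x n).1), ?_, ?_⟩
  · intro n x y hxy
    simp only [hb, refBudget_congr hxy, hxy n le_rfl]
  · intro x hx0 hx
    have hmem := hx.mem_closed hC (by rw [hx0]; exact hv)
    have hinv : ∀ n, 0 < refBudget x n ∧ refBudget x n / 2 < (x n).2 ∧
        k * refBudget x n * (potential u f x n - potential u f x 0) ≤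
          (x n).2 - refBudget x n := by
      intro n
      induction n with
      | zero =>
        simp only [refBudget, hx0]
        exact ⟨hB, by linarith, by simp⟩
      | succ n ih =>
        obtain ⟨i1, i2, i3⟩ := ih
        have hs0 := halfGap_nonneg G f (x n).1
        have hsS := hS (x n).1
        have hb0 : 0 ≤ b n x := by positivity
        have hb1 : b n x ≤ refBudget x n / 4 := by
          have : k * halfGap G f (x n).1 ≤ 1 / 4 :=
            (mul_le_mul_of_nonneg_left hsS hk0.le).trans hkS
          have := mul_le_mul_of_nonneg_left this i1.le
          simp only [hb]
          linarith
        have hkey : refBudget x n / 4 < (x (n + 1)).2 ∧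
            k * refBudget x n * (potential u f x (n + 1) - potential u f x 0) ≤
              (x (n + 1)).2 - refBudget x n := by
          have hkp : 0 ≤ k * refBudget x n := by positivity
          rcases hx.potential_step (hf _ (hmem n)) hb0 (by linarith) with ⟨h1, h2⟩ | ⟨h1, h2⟩
          · have := mul_le_mul_of_nonneg_left h2 hkp
            simp only [hb] at h1 hb1
            exact ⟨by linarith, by linarith⟩
          · have := mul_le_mul_of_nonneg_left h2 hkp
            simp only [hb] at h1 hb0
            exact ⟨by linarith, by linarith⟩
        rw [refBudget]
        split_ifs with hr
        · have hp : potential u f x (n + 1) - potential u f x 0 ≤ 0 := by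
            by_contra! hpos
            have : 0 < k * refBudget x n * (potential u f x (n + 1) - potential u f x 0) := by
              positivity
            linarith [hkey.2]
          have hpos : 0 < (x (n + 1)).2 := by linarith [hkey.1]
          refine ⟨hpos, by linarith, ?_⟩
          rw [sub_self]
          exact mul_nonpos_of_nonneg_of_nonpos (by positivity) hp
        · exact ⟨i1, not_le.1 hr, hkey.2⟩
    have hbud : ∀ n, (x n).2 ≤ 1 := fun n =>
      (hx.budget_mem (by rw [hx0]; exact hB.le) (by rw [hx0]; exact hB1) n).2
    by_cases hfreq : ∃ᶠ n in Filter.atTop, refBudget x n = (x n).2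
    · refine ⟨potential u f x 0 + M, hfreq.mono fun n hn => ?_⟩
      obtain ⟨i1, _, i3⟩ := hinv n
      have hp : potential u f x n - potential u f x 0 ≤ 0 := by
        by_contra! hpos
        have : 0 < k * refBudget x n * (potential u f x n - potential u f x 0) := by positivity
        linarith
      linarith [hM x n]
    · rw [Filter.not_frequently, Filter.eventually_atTop] at hfreq
      obtain ⟨N, hN⟩ := hfreq
      have hconst : ∀ n ≥ N, refBudget x n = refBudget x N := by
        intro n hn
        induction n, hn using Nat.le_induction with
        | base => rfl
        | succ n hn ih =>
          have := hN (n + 1) (by omega)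
          rw [refBudget] at this ⊢
          split_ifs at this ⊢ with hr
          · exact absurd rfl this
          · exact ih
      refine ⟨potential u f x 0 + 1 / (k * refBudget x N) + M,
        ((Filter.eventually_ge_atTop N).mono fun n hn => ?_).frequently⟩
      obtain ⟨i1, _, i3⟩ := hinv n
      rw [hconst n hn] at i1 i3
      have hp : potential u f x n - potential u f x 0 ≤ 1 / (k * refBudget x N) := by
        rw [le_div_iff₀ (by positivity)]
        linarith [hbud n]
      linarith [hM x n]

/-! ### Objectives -/

/-- The accumulated weight is infinitely often below some bound. -/
def MinObj {V : Type} (w : V → ℤ) (y : ℕ → V) : Prop :=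
  ∃ K : ℝ, ∃ᶠ n in Filter.atTop, ∑ i ∈ Finset.range n, (w (y i) : ℝ) ≤ K

/-- The accumulated weight grows at least linearly. -/
def MaxObj {V : Type} (w : V → ℤ) (y : ℕ → V) : Prop :=
  ∃ η > 0, ∃ K : ℝ, ∀ n : ℕ, η * n - K ≤ ∑ i ∈ Finset.range n, (w (y i) : ℝ)

lemma MinObj.of_tail {V : Type} {w : V → ℤ} {y : ℕ → V} (h : MinObj w fun n => y (n + 1)) :
    MinObj w y := by
  obtain ⟨K, hK⟩ := h
  refine ⟨K + w (y 0), ?_⟩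
  rw [Filter.frequently_atTop] at hK ⊢
  intro a
  obtain ⟨n, hn, h⟩ := hK a
  refine ⟨n + 1, by omega, ?_⟩
  rw [Finset.sum_range_succ']
  linarith

lemma MaxObj.of_tail {V : Type} {w : V → ℤ} {y : ℕ → V} (h : MaxObj w fun n => y (n + 1)) :
    MaxObj w y := by
  obtain ⟨η, hη, K, hK⟩ := h
  refine ⟨η, hη, |K| + η + |(w (y 0) : ℝ)|, fun n => ?_⟩
  have h0 := neg_abs_le (w (y 0) : ℝ)
  have h1 := le_abs_self K
  rcases n with _ | n
  · simp only [Nat.cast_zero, Finset.range_zero, Finset.sum_empty]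
    linarith [abs_nonneg K, abs_nonneg (w (y 0) : ℝ)]
  · rw [Finset.sum_range_succ']
    have := hK n
    push_cast
    linarith

lemma secureThresh_add_le_one {V : Type} [Fintype V] (G : BiddingGame V) (w : V → ℤ) (v : V) :
    secureThresh G (MinObj w) v + secureThresh G (MaxObj w) v ≤ 1 := by
  refine add_le_one_of_le_average G (secureThresh_le_average G fun _ => MinObj.of_tail)
    (secureThresh_le_average G fun _ => MaxObj.of_tail) (fun C hne hC => ?_) v
  obtain ⟨D, hDC, ⟨a, ha⟩, hD, hconn⟩ := exists_strongly_connected_subset hne hC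
  refine ⟨a, hDC ha, ?_⟩
  rcases exists_potential (fun v => (w v : ℝ)) ⟨a, ha⟩ hD hconn with ⟨f, hf⟩ | ⟨δ, hδ, f, hf⟩
  · have h1 : secureThresh G (MinObj w) a ≤ 0 := secureThresh_le
      ⟨by simp, fun B hB hB1 => secures_frequently_bounded_of_potential hD hf ha hB hB1⟩
    linarith [(secureThresh_mem G (MaxObj w) a).2]
  · have h1 : secureThresh G (MaxObj w) a ≤ 0 := by
      refine secureThresh_le ⟨by simp, fun B hB hB1 => ?_⟩
      obtain ⟨σ, hσ, h⟩ :=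
        secures_linear_of_potential (u := fun v => -(w v : ℝ)) hD hδ hf ha hB hB1
      refine ⟨σ, hσ, fun x hx0 hx => ?_⟩
      obtain ⟨η, hη, K, hK⟩ := h x hx0 hx
      refine ⟨η, hη, K, fun n => ?_⟩
      have := hK n
      rw [Finset.sum_neg_distrib] at this
      linarith
    linarith [(secureThresh_mem G (MinObj w) a).2]

lemma abs_energy_div_le {V : Type} [Fintype V] (w : V → ℤ) (tb : TieBreak V) (f1 f2 : Strat V)
    (v : V) (n : ℕ) : |(energy w tb f1 f2 v n : ℝ) / n| ≤ ∑ a, |(w a : ℝ)| := by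
  have hW : 0 ≤ ∑ a, |(w a : ℝ)| := Finset.sum_nonneg fun a _ => abs_nonneg _
  rw [abs_div, Nat.abs_cast]
  refine div_le_of_le_mul₀ (Nat.cast_nonneg n) hW ?_
  unfold energy
  push_cast
  calc |∑ i ∈ Finset.range n, (w (visit tb f1 f2 v i) : ℝ)|
      ≤ ∑ i ∈ Finset.range n, |(w (visit tb f1 f2 v i) : ℝ)| := Finset.abs_sum_le_sum_abs _ _
    _ ≤ ∑ i ∈ Finset.range n, ∑ a, |(w a : ℝ)| := Finset.sum_le_sum fun i _ =>
        Finset.single_le_sum (f := fun a => |(w a : ℝ)|) (fun a _ => abs_nonneg _)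
          (Finset.mem_univ _)
    _ = (∑ a, |(w a : ℝ)|) * n := by simp [mul_comm]

lemma MinObj.mpval_nonpos {V : Type} [Fintype V] {w : V → ℤ} {tb : TieBreak V} {f1 f2 : Strat V}
    {v : V} (h : MinObj w (visit tb f1 f2 v)) : mpval w tb f1 f2 v ≤ 0 := by
  obtain ⟨K, hK⟩ := h
  refine le_of_forall_pos_le_add fun ε hε => ?_
  rw [zero_add]
  refine Filter.liminf_le_of_frequently_le ?_ (Filter.isBoundedUnder_of
    ⟨-∑ a, |(w a : ℝ)|, fun n => (abs_le.1 (abs_energy_div_le w tb f1 f2 v n)).1⟩)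
  have hlim : ∀ᶠ n : ℕ in Filter.atTop, K / n < ε :=
    (tendsto_const_div_atTop_nhds_zero_nat K).eventually_lt_const hε
  refine (hK.and_eventually hlim).mono fun n hn => le_trans ?_ hn.2.le
  have := hn.1
  unfold energy
  push_cast
  gcongr

lemma MaxObj.mpval_pos {V : Type} [Fintype V] {w : V → ℤ} {tb : TieBreak V} {f1 f2 : Strat V}
    {v : V} (h : MaxObj w (visit tb f1 f2 v)) : 0 < mpval w tb f1 f2 v := by
  obtain ⟨η, hη, K, hK⟩ := h
  refine lt_of_lt_of_le (half_pos hη) ?_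
  refine Filter.le_liminf_of_le (Filter.IsBoundedUnder.isCoboundedUnder_ge (Filter.isBoundedUnder_of
    ⟨∑ a, |(w a : ℝ)|, fun n => (abs_le.1 (abs_energy_div_le w tb f1 f2 v n)).2⟩)) ?_
  have hlim : ∀ᶠ n : ℕ in Filter.atTop, K / n < η / 2 :=
    (tendsto_const_div_atTop_nhds_zero_nat K).eventually_lt_const (half_pos hη)
  filter_upwards [hlim, Filter.eventually_gt_atTop 0] with n hn hn0
  have hn0' : (0 : ℝ) < n := Nat.cast_pos.2 hn0
  rw [div_lt_iff₀ hn0'] at hn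
  rw [le_div_iff₀ hn0']
  have := hK n
  unfold energy
  push_cast
  linarith

lemma not_minWinsFrom_and_maxWinsFrom {V : Type} [Fintype V] {G : BiddingGame V} {w : V → ℤ}
    {v : V} {B : ℝ} (h1 : MinWinsFrom G w v B) (h2 : MaxWinsFrom G w v (1 - B)) : False := by
  obtain ⟨f1, hl1, h1⟩ := h1 fun _ => true
  obtain ⟨f2, hl2, h2⟩ := h2 fun _ => true
  rw [sub_sub_cancel] at h2
  exact (h2 f1 hl1).not_ge (h1 f2 hl2)

lemma IsThreshMP.le {V : Type} [Fintype V] {G : BiddingGame V} {w : V → ℤ} {v : V} {t t' : ℝ}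
    (ht0 : 0 ≤ t) (ht1 : t' ≤ 1) (h : IsThreshMP G w v t) (h' : IsThreshMP G w v t') : t' ≤ t := by
  by_contra! hlt
  exact not_minWinsFrom_and_maxWinsFrom (B := (t + t') / 2)
    (h.1 _ (by linarith) (by linarith)) (h'.2 _ (by linarith) (by linarith))

lemma isThreshMP_secureThresh {V : Type} [Fintype V] (G : BiddingGame V) (w : V → ℤ) (v : V) :
    IsThreshMP G w v (secureThresh G (MinObj w) v) := by
  have h0 := secureThresh_mem G (MinObj w) v
  have h1 := secureThresh_mem G (MaxObj w) v
  have h2 := secureThresh_add_le_one G w v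
  refine ⟨fun B hB ht tb => ?_, fun B hB ht tb => ?_⟩
  · obtain ⟨f1, hl, h⟩ := (secures_of_secureThresh_lt ht hB).player1 (h0.1.trans ht.le) tb
    exact ⟨f1, hl, fun f2 hf2 => (h f2 hf2).mpval_nonpos⟩
  · have ht' : secureThresh G (MaxObj w) v < B := by linarith
    obtain ⟨f2, hl, h⟩ := (secures_of_secureThresh_lt ht' hB).player2 (h1.1.trans ht'.le) tb
    exact ⟨f2, hl, fun f1 hf1 => (h f1 hf1).mpval_pos⟩

end MPBidding

/-- In every mean-payoff bidding game, threshold budgets exist and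
are unique: there is exactly one function `Thresh : V → [0,1]` such that from every
vertex `v`, Min guarantees a nonpositive mean-payoff value whenever his budget exceeds
`Thresh v` and Max guarantees a strictly positive mean-payoff value whenever his budget
exceeds `1 - Thresh v`. -/
theorem mp_threshold_exists_unique
    {V : Type} [Fintype V] (G : BiddingGame V) (w : V → ℤ) :
    ∃! Thresh : V → ℝ,
      ∀ v : V, Thresh v ∈ Set.Icc (0 : ℝ) 1 ∧ IsThreshMP G w v (Thresh v) := by
  refine ⟨MPBidding.secureThresh G (MPBidding.MinObj w), fun v =>
    ⟨MPBidding.secureThresh_mem G _ v, MPBidding.isThreshMP_secureThresh G w v⟩,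
    fun t ht => funext fun v => ?_⟩
  have h := MPBidding.isThreshMP_secureThresh G w v
  have hm := MPBidding.secureThresh_mem G (MPBidding.MinObj w) v
  obtain ⟨hv, hv'⟩ := ht v
  exact le_antisymm (MPBidding.IsThreshMP.le hm.1 hv.2 h hv')
    (MPBidding.IsThreshMP.le hv.1 hm.2 hv' h)
end
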